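/- arXiv:1803.08386 — 7 statements merged into one kernel-verified Lean document; each statement's English description precedes it below -/
import Mathlib

section
/- Let x be a solution of the system with output y, and let T ∈ (t0, τ] be such that Ψ(T) is invertible. Then the map F_T has x as a fixed point on [t0, T]: F_T(t; x) = x(t) for every t ∈ [t0, T]. -/
open MeasureTheory Matrix Set Filter Topology

noncomputable section

/-- `x` is a solution of `ẋ = A(t)x + g(t,x)` on `[t0, τ]` (integral form, componentwise). -/
def IsSolution (n : ℕ) (t0 τ : ℝ) (A : ℝ → Matrix (Fin n) (Fin n) ℝ)
    (g : ℝ → (Fin n → ℝ) → (Fin n → ℝ)) (x : ℝ → (Fin n → ℝ)) : Prop :=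
  ContinuousOn x (Set.Icc t0 τ) ∧
    ∀ t ∈ Set.Icc t0 τ, ∀ i : Fin n,
      x t i = x t0 i + ∫ s in t0..t, ((A s).mulVec (x s) i + g s (x s) i)

/-- `Φ` is the fundamental matrix of `ẋ = A(t)x` on `[t0, τ]`. -/
def IsFundamental (n : ℕ) (t0 τ : ℝ) (A : ℝ → Matrix (Fin n) (Fin n) ℝ)
    (Φ : ℝ → Matrix (Fin n) (Fin n) ℝ) : Prop :=
  (∀ i j : Fin n, ContinuousOn (fun t => Φ t i j) (Set.Icc t0 τ)) ∧
    ∀ t ∈ Set.Icc t0 τ, ∀ i j : Fin n,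
      Φ t i j = (1 : Matrix (Fin n) (Fin n) ℝ) i j + ∫ s in t0..t, (A s * Φ s) i j

/-- `Ψ(t) = ∫_{t0}^t Φ(s)ᵀ C(s)ᵀ C(s) Φ(s) ds` (entrywise integral). -/
def Psi (n k0 : ℕ) (t0 : ℝ) (C : ℝ → Matrix (Fin k0) (Fin n) ℝ)
    (Φ : ℝ → Matrix (Fin n) (Fin n) ℝ) (t : ℝ) : Matrix (Fin n) (Fin n) ℝ :=
  fun i j => ∫ s in t0..t, ((Φ s)ᵀ * (C s)ᵀ * C s * Φ s) i j

/-- `Ξ(t; z) = ∫_{t0}^t Φ(ρ)ᵀ C(ρ)ᵀ C(ρ) Φ(ρ) (∫_{t0}^ρ Φ(s)⁻¹ g(s, z(s)) ds) dρ`. -/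
def Xi (n k0 : ℕ) (t0 : ℝ) (C : ℝ → Matrix (Fin k0) (Fin n) ℝ)
    (Φ : ℝ → Matrix (Fin n) (Fin n) ℝ) (g : ℝ → (Fin n → ℝ) → (Fin n → ℝ))
    (z : ℝ → (Fin n → ℝ)) (t : ℝ) : Fin n → ℝ :=
  fun i => ∫ ρ in t0..t,
    ((Φ ρ)ᵀ * (C ρ)ᵀ * C ρ * Φ ρ).mulVec
      (fun i' => ∫ s in t0..ρ, ((Φ s)⁻¹).mulVec (g s (z s)) i') i

/-- The map `F_T(t; z)`. -/
def Fmap (n k0 : ℕ) (t0 : ℝ) (C : ℝ → Matrix (Fin k0) (Fin n) ℝ)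
    (Φ : ℝ → Matrix (Fin n) (Fin n) ℝ) (g : ℝ → (Fin n → ℝ) → (Fin n → ℝ))
    (y : ℝ → (Fin k0 → ℝ)) (T : ℝ) (z : ℝ → (Fin n → ℝ)) (t : ℝ) : Fin n → ℝ :=
  (Φ t).mulVec
      ((Psi n k0 t0 C Φ T)⁻¹.mulVec
        ((fun i => ∫ ρ in t0..T, ((Φ ρ)ᵀ * (C ρ)ᵀ).mulVec (y ρ) i)
          - Xi n k0 t0 C Φ g z T))
    + (Φ t).mulVec (fun i => ∫ ρ in t0..t, ((Φ ρ)⁻¹).mulVec (g ρ (z ρ)) i)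

/-- supremum norm of `f` over `[a, b]`. -/
def supN (n : ℕ) (a b : ℝ) (f : ℝ → (Fin n → ℝ)) : ℝ :=
  ⨆ t : Set.Icc a b, ‖f (t : ℝ)‖

/-- Regularity of the data `A`, `C`, `g` on `[t0, τ]`:  `A`, `C` measurable and bounded;
`g` measurable in `t`, continuous in `x`, bounded on bounded sets. -/
def RegularData (n k0 : ℕ) (t0 τ : ℝ) (A : ℝ → Matrix (Fin n) (Fin n) ℝ)
    (C : ℝ → Matrix (Fin k0) (Fin n) ℝ)
    (g : ℝ → (Fin n → ℝ) → (Fin n → ℝ)) : Prop :=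
  (∀ i j, Measurable fun t => A t i j) ∧
  (∃ M : ℝ, ∀ t ∈ Set.Icc t0 τ, ∀ i j, |A t i j| ≤ M) ∧
  (∀ i j, Measurable fun t => C t i j) ∧
  (∃ M : ℝ, ∀ t ∈ Set.Icc t0 τ, ∀ i j, |C t i j| ≤ M) ∧
  (∀ v : Fin n → ℝ, ∀ i, Measurable fun t => g t v i) ∧
  (∀ t ∈ Set.Icc t0 τ, Continuous (g t)) ∧
  (∀ R > (0:ℝ), ∃ M : ℝ, ∀ t ∈ Set.Icc t0 τ, ∀ v : Fin n → ℝ, ‖v‖ ≤ R → ‖g t v‖ ≤ M)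


lemma aux_bdd {a b : ℝ} (hab : a ≤ b) {f : ℝ → ℝ} (hf : Measurable f) {M : ℝ}
    (hM : ∀ t ∈ Set.Icc a b, |f t| ≤ M) : IntervalIntegrable f volume a b := by
  rw [intervalIntegrable_iff_integrableOn_Icc_of_le hab]
  refine Measure.integrableOn_of_bounded (M := M) ?_ hf.aestronglyMeasurable ?_
  · simp
  · filter_upwards [ae_restrict_mem measurableSet_Icc] with t ht using hM t ht

lemma aux_sub {a b t : ℝ} (ht : t ∈ Set.Icc a b) {f : ℝ → ℝ}
    (hf : IntervalIntegrable f volume a b) : IntervalIntegrable f volume a t := by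
  refine hf.mono_set ?_
  rw [uIcc_of_le ht.1, uIcc_of_le (ht.1.trans ht.2)]
  exact Icc_subset_Icc_right ht.2

lemma aux_cmul {a b : ℝ} (hab : a ≤ b) {f h : ℝ → ℝ}
    (hf : IntervalIntegrable f volume a b) (hh : ContinuousOn h (Set.Icc a b)) :
    IntervalIntegrable (fun t => f t * h t) volume a b := by
  refine hf.mul_continuousOn ?_
  rwa [uIcc_of_le hab]

lemma aux_cprim {a b : ℝ} (hab : a ≤ b) {f : ℝ → ℝ}
    (hf : IntervalIntegrable f volume a b) :
    ContinuousOn (fun t => ∫ s in a..t, f s) (Set.Icc a b) := by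
  have := (hf.absolutelyContinuousOnInterval_intervalIntegral (c := a) (by simp)).continuousOn
  rwa [uIcc_of_le hab] at this

lemma aux_prod {a b : ℝ} (hab : a ≤ b) {f h p q : ℝ → ℝ}
    (hp : IntervalIntegrable p volume a b) (hq : IntervalIntegrable q volume a b)
    (f0 h0 : ℝ) (hf : ∀ t ∈ Set.Icc a b, f t = f0 + ∫ s in a..t, p s)
    (hh : ∀ t ∈ Set.Icc a b, h t = h0 + ∫ s in a..t, q s) :
    ∀ t ∈ Set.Icc a b, f t * h t = f0 * h0 + ∫ s in a..t, (p s * h s + f s * q s) := by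
  intro t ht
  have hp' := aux_sub ht hp
  have hq' := aux_sub ht hq
  have acc : ∀ c : ℝ, AbsolutelyContinuousOnInterval (fun _ : ℝ => c) a t := fun c =>
    (LipschitzWith.const c).lipschitzOnWith.absolutelyContinuousOnInterval
  have acf : AbsolutelyContinuousOnInterval (fun t => f0 + ∫ s in a..t, p s) a t :=
    (acc f0).add (hp'.absolutelyContinuousOnInterval_intervalIntegral (c := a) (by simp))
  have ach : AbsolutelyContinuousOnInterval (fun t => h0 + ∫ s in a..t, q s) a t :=
    (acc h0).add (hq'.absolutelyContinuousOnInterval_intervalIntegral (c := a) (by simp))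
  have key := acf.integral_deriv_mul_eq_sub ach
  simp only [intervalIntegral.integral_same, add_zero] at key
  have hcongr : ∫ s in a..t, (p s * h s + f s * q s) = ∫ x in a..t,
      (deriv (fun t => f0 + ∫ s in a..t, p s) x * (h0 + ∫ s in a..x, q s) +
        (f0 + ∫ s in a..x, p s) * deriv (fun t => h0 + ∫ s in a..t, q s) x) := by
    apply intervalIntegral.integral_congr_ae
    filter_upwards [hp'.ae_hasDerivAt_integral, hq'.ae_hasDerivAt_integral] with s h1 h2 hs
    have hs' := uIoc_subset_uIcc hs
    have e1 := (h1 hs' a (by simp)).const_add f0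
    have e2 := (h2 hs' a (by simp)).const_add h0
    rw [e1.deriv, e2.deriv]
    rw [uIcc_of_le ht.1] at hs'
    have hs2 : s ∈ Set.Icc a b := ⟨hs'.1, hs'.2.trans ht.2⟩
    rw [hf s hs2, hh s hs2]
  rw [hcongr, key, hf t ht, hh t ht]
  ring

lemma aux_gron {n : ℕ} {a b : ℝ} (hab : a ≤ b) {A : ℝ → Matrix (Fin n) (Fin n) ℝ} {M : ℝ}
    (hM : ∀ t ∈ Set.Icc a b, ∀ i j, |A t i j| ≤ M) {d : ℝ → Fin n → ℝ}
    (hc : ∀ i, ContinuousOn (fun t => d t i) (Set.Icc a b))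
    (hd : ∀ t ∈ Set.Icc a b, ∀ i, d t i = ∫ s in a..t, ∑ j, A s i j * d s j) :
    ∀ t ∈ Set.Icc a b, d t = 0 := by
  have hNc : ContinuousOn (fun t => ∑ j, |d t j|) (Set.Icc a b) :=
    continuousOn_finsetSum _ fun j _ => (hc j).abs
  set N : ℝ → ℝ := Set.IccExtend hab ((Set.Icc a b).restrict (fun t => ∑ j, |d t j|)) with hN
  have hNcont : Continuous N := hNc.restrict.Icc_extend'
  have hNe : ∀ t ∈ Set.Icc a b, N t = ∑ j, |d t j| := fun t ht => by
    rw [hN, Set.IccExtend_of_mem _ _ ht]; rfl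
  have hN0 : ∀ t ∈ Set.Icc a b, 0 ≤ N t := fun t ht => by
    rw [hNe t ht]; positivity
  have hbound : ∀ t ∈ Set.Icc a b, ∀ i, |d t i| ≤ M * ∫ s in a..t, N s := by
    intro t ht i
    rw [hd t ht i, ← intervalIntegral.integral_const_mul, ← Real.norm_eq_abs]
    refine intervalIntegral.norm_integral_le_of_norm_le ht.1 ?_
      ((hNcont.const_mul M).intervalIntegrable _ _)
    refine Filter.Eventually.of_forall fun s hs => ?_
    have hs' : s ∈ Set.Icc a b := ⟨hs.1.le, hs.2.trans ht.2⟩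
    rw [hNe s hs', Finset.mul_sum, Real.norm_eq_abs]
    refine (Finset.abs_sum_le_sum_abs _ _).trans (Finset.sum_le_sum fun j _ => ?_)
    rw [abs_mul]
    exact mul_le_mul_of_nonneg_right (hM s hs' i j) (abs_nonneg _)
  have hder : ∀ t, HasDerivAt (fun t => ∫ s in a..t, N s) (N t) t := fun t =>
    (hNcont.integral_hasStrictDerivAt a t).hasDerivAt
  have hz := eq_zero_of_abs_deriv_le_mul_abs_self_of_eq_zero_right (K := n * M) (a := a) (b := b)
    (f := fun t => ∫ s in a..t, N s) (f' := N)
    (fun t _ => (hder t).continuousAt.continuousWithinAt)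
    (fun t _ => (hder t).hasDerivWithinAt) (by simp) (by
      intro t ht
      have ht' : t ∈ Set.Icc a b := ⟨ht.1, ht.2.le⟩
      have h0 : 0 ≤ ∫ s in a..t, N s := intervalIntegral.integral_nonneg ht.1
        fun s hs => hN0 s ⟨hs.1, hs.2.trans ht'.2⟩
      rw [Real.norm_of_nonneg (hN0 t ht'), Real.norm_of_nonneg h0, hNe t ht']
      refine (Finset.sum_le_sum fun j _ => hbound t ht' j).trans ?_
      simp [mul_assoc])
  intro t ht
  ext i
  have := hbound t ht i
  have hz' : ∫ s in a..t, N s = 0 := hz t ht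
  rw [hz', mul_zero] at this
  simpa using this

lemma aux_g {n : ℕ} {a b : ℝ} (hab : a ≤ b) {g : ℝ → (Fin n → ℝ) → (Fin n → ℝ)}
    (hm : ∀ v : Fin n → ℝ, ∀ i, Measurable fun t => g t v i)
    (hcg : ∀ t ∈ Set.Icc a b, Continuous (g t))
    (hb : ∀ R > (0:ℝ), ∃ M : ℝ, ∀ t ∈ Set.Icc a b, ∀ v : Fin n → ℝ, ‖v‖ ≤ R → ‖g t v‖ ≤ M)
    {x : ℝ → Fin n → ℝ} (hx : ContinuousOn x (Set.Icc a b)) (i : Fin n) :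
    IntervalIntegrable (fun t => g t (x t) i) volume a b := by
  classical
  obtain ⟨R, hR⟩ := isCompact_Icc.exists_bound_of_continuousOn hx
  obtain ⟨M, hM⟩ := hb (max R 1) (by positivity)
  set xe : ℝ → Fin n → ℝ := Set.IccExtend hab ((Set.Icc a b).restrict x) with hxe
  have hxc : Continuous xe := hx.restrict.Icc_extend'
  have hxe' : ∀ t ∈ Set.Icc a b, xe t = x t := fun t ht => by
    rw [hxe, Set.IccExtend_of_mem _ _ ht]; rfl
  let u : (Fin n → ℝ) → ℝ → ℝ := fun v t => (Set.Icc a b).indicator (fun t => g t v i) t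
  have hu : Measurable (Function.uncurry u) := by
    apply measurable_uncurry_of_continuous_of_measurable
    · intro t
      by_cases ht : t ∈ Set.Icc a b
      · simp only [u, Set.indicator_of_mem ht]
        exact (continuous_apply i).comp (hcg t ht)
      · simp only [u, Set.indicator_of_notMem ht]
        exact continuous_const
    · intro v
      exact (hm v i).indicator measurableSet_Icc
  have hG : Measurable (fun t => u (xe t) t) := hu.comp (hxc.measurable.prodMk measurable_id)
  have hGe : ∀ t ∈ Set.Icc a b, u (xe t) t = g t (x t) i := fun t ht => by
    simp only [u, Set.indicator_of_mem ht, hxe' t ht]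
  have hI : IntervalIntegrable (fun t => u (xe t) t) volume a b := by
    refine aux_bdd hab hG (M := M) fun t ht => ?_
    rw [hGe t ht]
    exact (norm_le_pi_norm (g t (x t)) i).trans (hM t ht _ ((hR t ht).trans (le_max_left _ _)))
  refine hI.congr fun t ht => hGe t ?_
  rw [uIoc_of_le hab] at ht
  exact Ioc_subset_Icc_self ht

lemma aux_inv {n : ℕ} {s : Set ℝ} {Φ : ℝ → Matrix (Fin n) (Fin n) ℝ}
    (hc : ∀ i j, ContinuousOn (fun t => Φ t i j) s) (hu : ∀ t ∈ s, IsUnit (Φ t)) (i j : Fin n) :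
    ContinuousOn (fun t => (Φ t)⁻¹ i j) s := by
  have hΦc : ContinuousOn Φ s := continuousOn_pi.2 fun i => continuousOn_pi.2 fun j => hc i j
  have hdet : ContinuousOn (fun t => (Φ t).det) s :=
    (Continuous.matrix_det continuous_id).comp_continuousOn hΦc
  have hadj : ContinuousOn (fun t => (Φ t).adjugate i j) s :=
    ((Continuous.matrix_adjugate continuous_id).matrix_elem i j).comp_continuousOn hΦc
  have : ContinuousOn (fun t => ((Φ t).det)⁻¹ * (Φ t).adjugate i j) s :=
    (hdet.inv₀ fun t ht => ((Matrix.isUnit_iff_isUnit_det _).1 (hu t ht)).ne_zero).mul hadj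
  simpa [Matrix.inv_def] using this

theorem stmt6 (n k0 : ℕ) (hn : 1 ≤ n) (hk0 : 1 ≤ k0) (t0 τ : ℝ) (ht : t0 < τ)
    (A : ℝ → Matrix (Fin n) (Fin n) ℝ) (C : ℝ → Matrix (Fin k0) (Fin n) ℝ)
    (g : ℝ → (Fin n → ℝ) → (Fin n → ℝ))
    (hreg : RegularData n k0 t0 τ A C g)
    (Φ : ℝ → Matrix (Fin n) (Fin n) ℝ) (hΦ : IsFundamental n t0 τ A Φ)
    (hΦinv : ∀ t ∈ Set.Icc t0 τ, IsUnit (Φ t))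
    (x : ℝ → (Fin n → ℝ)) (hx : IsSolution n t0 τ A g x)
    (y : ℝ → (Fin k0 → ℝ)) (hy : ∀ t ∈ Set.Icc t0 τ, y t = (C t).mulVec (x t))
    (T : ℝ) (hT : T ∈ Set.Ioc t0 τ) (hΨT : IsUnit (Psi n k0 t0 C Φ T)) :
    ∀ t ∈ Set.Icc t0 T, Fmap n k0 t0 C Φ g y T x t = x t := by
  obtain ⟨hAm, ⟨MA, hMA⟩, hCm, ⟨MC, hMC⟩, hgm, hgc, hgb⟩ := hreg
  obtain ⟨hΦc, hΦe⟩ := hΦ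
  obtain ⟨hxc, hxe⟩ := hx
  have hab := ht.le
  have hxci : ∀ i, ContinuousOn (fun t => x t i) (Set.Icc t0 τ) := fun i =>
    (continuous_apply i).comp_continuousOn hxc
  have hgI : ∀ i, IntervalIntegrable (fun t => g t (x t) i) volume t0 τ := fun i =>
    aux_g hab hgm hgc hgb hxc i
  have hAI : ∀ i j, IntervalIntegrable (fun t => A t i j) volume t0 τ := fun i j =>
    aux_bdd hab (hAm i j) (M := MA) fun t ht => hMA t ht i j
  have hinvc := aux_inv hΦc hΦinv
  have hwI : ∀ i, IntervalIntegrable (fun t => ((Φ t)⁻¹).mulVec (g t (x t)) i) volume t0 τ := by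
    intro i
    have := IntervalIntegrable.sum Finset.univ fun j _ => aux_cmul hab (hgI j) (hinvc i j)
    refine this.congr fun t _ => ?_
    simp [Matrix.mulVec, dotProduct, mul_comm]
  have hAΦI : ∀ i j, IntervalIntegrable (fun t => (A t * Φ t) i j) volume t0 τ := by
    intro i j
    have := IntervalIntegrable.sum Finset.univ fun k _ => aux_cmul hab (hAI i k) (hΦc k j)
    refine this.congr fun t _ => ?_
    simp [Matrix.mul_apply]
  set v : ℝ → Fin n → ℝ := fun t i => ∫ s in t0..t, ((Φ s)⁻¹).mulVec (g s (x s)) i with hv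
  have hvc : ∀ i, ContinuousOn (fun t => v t i) (Set.Icc t0 τ) := fun i => aux_cprim hab (hwI i)
  set u : ℝ → Fin n → ℝ := fun t => x t0 + v t with hu
  have huc : ∀ i, ContinuousOn (fun t => u t i) (Set.Icc t0 τ) := fun i =>
    continuousOn_const.add (hvc i)
  have hprod : ∀ i j, ∀ t ∈ Set.Icc t0 τ, Φ t i j * u t j =
      (1 : Matrix (Fin n) (Fin n) ℝ) i j * x t0 j + ∫ s in t0..t,
        ((A s * Φ s) i j * u s j + Φ s i j * ((Φ s)⁻¹).mulVec (g s (x s)) j) := fun i j =>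
    aux_prod hab (hAΦI i j) (hwI j) _ _ (fun t ht => hΦe t ht i j) (fun t ht => rfl)
  have hprodI : ∀ i j, IntervalIntegrable (fun s => (A s * Φ s) i j * u s j +
      Φ s i j * ((Φ s)⁻¹).mulVec (g s (x s)) j) volume t0 τ := fun i j =>
    (aux_cmul hab (hAΦI i j) (huc j)).add
      ((aux_cmul hab (hwI j) (hΦc i j)).congr fun t _ => mul_comm _ _)
  have hAxI : ∀ i, IntervalIntegrable (fun s => (A s).mulVec (x s) i + g s (x s) i)
      volume t0 τ := by
    intro i
    refine IntervalIntegrable.add ?_ (hgI i)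
    have := IntervalIntegrable.sum Finset.univ fun k _ => aux_cmul hab (hAI i k) (hxci k)
    refine this.congr fun t _ => ?_
    simp [Matrix.mulVec, dotProduct]
  have hd : ∀ t ∈ Set.Icc t0 τ, x t - (Φ t).mulVec (u t) = 0 := by
    refine aux_gron hab hMA (d := fun t => x t - (Φ t).mulVec (u t)) ?_ ?_
    · intro i
      simp only [Pi.sub_apply, Matrix.mulVec, dotProduct]
      exact (hxci i).sub (continuousOn_finsetSum _ fun j _ => (hΦc i j).mul (huc j))
    · intro t ht i
      have e1 : (Φ t).mulVec (u t) i = x t0 i + ∫ s in t0..t, ∑ j,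
          ((A s * Φ s) i j * u s j + Φ s i j * ((Φ s)⁻¹).mulVec (g s (x s)) j) := by
        rw [intervalIntegral.integral_finsetSum fun j _ => aux_sub ht (hprodI i j)]
        simp only [Matrix.mulVec, dotProduct] at hprod ⊢
        rw [Finset.sum_congr rfl fun j _ => hprod i j t ht, Finset.sum_add_distrib]
        simp [Matrix.one_apply]
      have hsI : IntervalIntegrable (fun s => ∑ j, ((A s * Φ s) i j * u s j +
          Φ s i j * ((Φ s)⁻¹).mulVec (g s (x s)) j)) volume t0 τ :=
        (IntervalIntegrable.sum Finset.univ fun j _ => hprodI i j).congr fun t _ => by simp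
      rw [Pi.sub_apply, e1, hxe t ht i, add_sub_add_left_eq_sub,
        ← intervalIntegral.integral_sub (aux_sub ht (hAxI i)) (aux_sub ht hsI)]
      refine intervalIntegral.integral_congr fun s hs => ?_
      rw [uIcc_of_le ht.1] at hs
      have hs' : s ∈ Set.Icc t0 τ := ⟨hs.1, hs.2.trans ht.2⟩
      have hΦΦ : Φ s * (Φ s)⁻¹ = 1 :=
        Matrix.mul_nonsing_inv _ ((Matrix.isUnit_iff_isUnit_det _).1 (hΦinv s hs'))
      have e2 : (A s).mulVec (x s - (Φ s).mulVec (u s)) = (A s).mulVec (x s) + g s (x s) -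
          ((A s * Φ s).mulVec (u s) + (Φ s).mulVec (((Φ s)⁻¹).mulVec (g s (x s)))) := by
        rw [Matrix.mulVec_sub, Matrix.mulVec_mulVec, Matrix.mulVec_mulVec, hΦΦ,
          Matrix.one_mulVec]
        abel
      have e3 := congrFun e2 i
      simp only [Pi.sub_apply, Pi.add_apply] at e3
      change _ = (A s).mulVec (x s - (Φ s).mulVec (u s)) i
      rw [e3, Finset.sum_add_distrib]
      rfl
  have hxu : ∀ t ∈ Set.Icc t0 τ, x t = (Φ t).mulVec (u t) := fun t ht => sub_eq_zero.1 (hd t ht)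
  -- the Gramian kernel
  have hTm : T ∈ Set.Icc t0 τ := ⟨hT.1.le, hT.2⟩
  have hKI : ∀ i j, IntervalIntegrable (fun s => ((Φ s)ᵀ * (C s)ᵀ * C s * Φ s) i j)
      volume t0 τ := by
    intro i j
    have hCC : ∀ k l m, IntervalIntegrable (fun t => C t k l * C t k m) volume t0 τ := by
      intro k l m
      refine aux_bdd hab ((hCm k l).mul (hCm k m)) (M := MC * MC) fun t ht => ?_
      rw [abs_mul]
      exact mul_le_mul (hMC t ht k l) (hMC t ht k m) (abs_nonneg _)
        ((abs_nonneg _).trans (hMC t ht k l))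
    have := IntervalIntegrable.sum Finset.univ fun m _ =>
      IntervalIntegrable.sum Finset.univ fun k _ =>
      IntervalIntegrable.sum Finset.univ fun l _ =>
        aux_cmul hab (aux_cmul hab (hCC k l m) (hΦc l i)) (hΦc m j)
    refine this.congr fun t _ => ?_
    simp only [Matrix.mul_apply, Matrix.transpose_apply, Finset.sum_apply, Finset.sum_mul]
    refine Finset.sum_congr rfl fun m _ => Finset.sum_congr rfl fun k _ =>
      Finset.sum_congr rfl fun l _ => ?_
    ring
  have hsplit : (fun i => ∫ ρ in t0..T, ((Φ ρ)ᵀ * (C ρ)ᵀ).mulVec (y ρ) i) =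
      (Psi n k0 t0 C Φ T).mulVec (x t0) + Xi n k0 t0 C Φ g x T := by
    ext i
    have h1 : ∀ w : ℝ → Fin n → ℝ, (∀ j, ContinuousOn (fun t => w t j) (Set.Icc t0 τ)) →
        IntervalIntegrable (fun ρ => ((Φ ρ)ᵀ * (C ρ)ᵀ * C ρ * Φ ρ).mulVec (w ρ) i)
          volume t0 T := by
      intro w hw
      have := IntervalIntegrable.sum Finset.univ fun j _ => aux_cmul hab (hKI i j) (hw j)
      refine aux_sub hTm (this.congr fun t _ => ?_)
      simp [Matrix.mulVec, dotProduct]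
    have h2 : (Psi n k0 t0 C Φ T).mulVec (x t0) i =
        ∫ ρ in t0..T, ((Φ ρ)ᵀ * (C ρ)ᵀ * C ρ * Φ ρ).mulVec (x t0) i := by
      simp only [Matrix.mulVec, dotProduct, Psi]
      rw [intervalIntegral.integral_finsetSum]
      · simp only [intervalIntegral.integral_mul_const]
      · intro j _
        exact (aux_sub hTm (hKI i j)).mul_const _
    rw [Pi.add_apply, h2]
    change _ = _ + ∫ ρ in t0..T, ((Φ ρ)ᵀ * (C ρ)ᵀ * C ρ * Φ ρ).mulVec (v ρ) i
    rw [← intervalIntegral.integral_add (h1 (fun _ => x t0) fun j => continuousOn_const)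
      (h1 v hvc)]
    refine intervalIntegral.integral_congr fun s hs => ?_
    rw [uIcc_of_le hTm.1] at hs
    have hs' : s ∈ Set.Icc t0 τ := ⟨hs.1, hs.2.trans hTm.2⟩
    have e : ((Φ s)ᵀ * (C s)ᵀ).mulVec (y s) = ((Φ s)ᵀ * (C s)ᵀ * C s * Φ s).mulVec (x t0) +
        ((Φ s)ᵀ * (C s)ᵀ * C s * Φ s).mulVec (v s) := by
      rw [hy s hs', hxu s hs', ← Matrix.mulVec_add]
      simp only [Matrix.mulVec_mulVec, Matrix.mul_assoc, hu]
    exact congrFun e i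
  intro t htT
  have htm : t ∈ Set.Icc t0 τ := ⟨htT.1, htT.2.trans hT.2⟩
  have hΨ : (Psi n k0 t0 C Φ T)⁻¹ * Psi n k0 t0 C Φ T = 1 :=
    Matrix.nonsing_inv_mul _ ((Matrix.isUnit_iff_isUnit_det _).1 hΨT)
  unfold Fmap
  rw [hsplit, add_sub_cancel_right, Matrix.mulVec_mulVec (x t0), hΨ, Matrix.one_mulVec,
    ← Matrix.mulVec_add]
  exact (hxu t htm).symm
end
end

section
/- Assume in addition that each a_l has a one-sided limit at t0: lim_{s→t0⁺} a_l(s) = α_l for l = 2, …, n. Then for all indices 1 ≤ i ≤ j ≤ n: lim_{t→t0⁺} Φ(t)_{ij} / (t − t0)^{j−i} = (∏_{l=i+1}^{j} α_l) / (j − i)! (for i = j the statement reads Φ(t)_{ii} = 1). -/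
open MeasureTheory Matrix Set Filter Topology

noncomputable section

/-- The triangular system matrix: `A(t)_{i,i+1} = a_{i+1}(t)` (1-based), zero elsewhere. -/
def triA (n : ℕ) (a : ℕ → ℝ → ℝ) (t : ℝ) : Matrix (Fin n) (Fin n) ℝ :=
  Matrix.of fun i j => if (j : ℕ) = (i : ℕ) + 1 then a ((i : ℕ) + 2) t else 0

/-- `iterInt t0 a l m t = ∫_{t0}^t a_l(s₁) ∫_{t0}^{s₁} a_{l+1}(s₂) ⋯ ` (depth `m`). -/
def iterInt (t0 : ℝ) (a : ℕ → ℝ → ℝ) : ℕ → ℕ → ℝ → ℝ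
  | _, 0, _ => 1
  | l, m + 1, t => ∫ s in t0..t, a l s * iterInt t0 a (l + 1) m s

/-- Regularity: each `a_l`, `l = 2, …, n`, measurable and bounded on `[t0, τ]`. -/
def ARegular (n : ℕ) (t0 τ : ℝ) (a : ℕ → ℝ → ℝ) : Prop :=
  (∀ l, 2 ≤ l → l ≤ n → Measurable (a l)) ∧
  (∀ l, 2 ≤ l → l ≤ n → ∃ M : ℝ, ∀ t ∈ Set.Icc t0 τ, |a l t| ≤ M)

theorem aux_int_tendsto (t0 τ : ℝ) (ht : t0 < τ) (f : ℝ → ℝ)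
    (hf : IntervalIntegrable f volume t0 τ) (m : ℕ) (c : ℝ)
    (h : Tendsto (fun s => f s / (s - t0) ^ m) (𝓝[>] t0) (𝓝 c)) :
    Tendsto (fun t => (∫ s in t0..t, f s) / (t - t0) ^ (m + 1)) (𝓝[>] t0)
      (𝓝 (c / ((m : ℝ) + 1))) := by
  rw [Metric.tendsto_nhds] at h ⊢
  intro ε hε
  have h1 := h (ε / 2) (by positivity)
  rw [eventually_nhdsWithin_iff, Metric.eventually_nhds_iff] at h1
  obtain ⟨δ, hδ, h1⟩ := h1
  have hmem : Ioo t0 (min τ (t0 + δ)) ∈ 𝓝[>] t0 :=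
    Ioo_mem_nhdsGT (lt_min ht (by linarith))
  filter_upwards [hmem] with t htm
  obtain ⟨ht0, ht1⟩ := htm
  have htτ : t < τ := lt_of_lt_of_le ht1 (min_le_left _ _)
  have htδ : t < t0 + δ := lt_of_lt_of_le ht1 (min_le_right _ _)
  have hft : IntervalIntegrable f volume t0 t := by
    apply hf.mono_set
    rw [uIcc_of_le ht0.le, uIcc_of_le ht.le]
    exact Icc_subset_Icc le_rfl htτ.le
  have hpow : ∫ s in t0..t, (s - t0) ^ m = (t - t0) ^ (m + 1) / ((m : ℝ) + 1) := by
    rw [intervalIntegral.integral_comp_sub_right (fun x => x ^ m) t0, integral_pow]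
    simp
  have hpi : IntervalIntegrable (fun s : ℝ => (s - t0) ^ m) volume t0 t :=
    Continuous.intervalIntegrable (by fun_prop) _ _
  have hb : ‖∫ s in t0..t, (f s - c * (s - t0) ^ m)‖ ≤ ∫ s in t0..t, ε / 2 * (s - t0) ^ m := by
    apply intervalIntegral.norm_integral_le_of_norm_le ht0.le
    · refine Eventually.of_forall fun s hs => ?_
      have hs0 : 0 < s - t0 := sub_pos.2 hs.1
      have h2 := h1 (y := s) (by
        rw [Real.dist_eq, abs_of_pos hs0]
        linarith [hs.2]) hs.1
      rw [Real.dist_eq] at h2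
      have hp : 0 < (s - t0) ^ m := pow_pos hs0 m
      have : f s - c * (s - t0) ^ m = (f s / (s - t0) ^ m - c) * (s - t0) ^ m := by
        field_simp
      rw [this, Real.norm_eq_abs, abs_mul, abs_of_pos hp]
      exact mul_le_mul_of_nonneg_right h2.le hp.le
    · exact hpi.const_mul _
  rw [intervalIntegral.integral_sub hft (hpi.const_mul c), intervalIntegral.integral_const_mul,
    intervalIntegral.integral_const_mul, hpow] at hb
  have hp : 0 < (t - t0) ^ (m + 1) := pow_pos (sub_pos.2 ht0) _
  have hm : (0 : ℝ) < (m : ℝ) + 1 := by positivity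
  rw [Real.dist_eq]
  have heq : (∫ s in t0..t, f s) / (t - t0) ^ (m + 1) - c / ((m : ℝ) + 1)
      = ((∫ s in t0..t, f s) - c * ((t - t0) ^ (m + 1) / ((m : ℝ) + 1))) / (t - t0) ^ (m + 1) := by
    field_simp
  rw [heq, abs_div, abs_of_pos hp, div_lt_iff₀ hp]
  rw [Real.norm_eq_abs] at hb
  refine lt_of_le_of_lt hb ?_
  have : (t - t0) ^ (m + 1) / ((m : ℝ) + 1) ≤ (t - t0) ^ (m + 1) :=
    div_le_self hp.le (by linarith [(Nat.cast_nonneg m : (0 : ℝ) ≤ m)])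
  nlinarith

theorem aux_mul_succ (n : ℕ) (a : ℕ → ℝ → ℝ) (s : ℝ) (P : Matrix (Fin n) (Fin n) ℝ)
    (i j : Fin n) (hi : (i : ℕ) + 1 < n) :
    (triA n a s * P) i j = a ((i : ℕ) + 2) s * P ⟨(i : ℕ) + 1, hi⟩ j := by
  rw [Matrix.mul_apply, Finset.sum_eq_single ⟨(i : ℕ) + 1, hi⟩]
  · simp [triA]
  · intro b _ hb
    have : (b : ℕ) ≠ (i : ℕ) + 1 := fun h => hb (Fin.ext h)
    simp [triA, this]
  · simp

theorem aux_mul_last (n : ℕ) (a : ℕ → ℝ → ℝ) (s : ℝ) (P : Matrix (Fin n) (Fin n) ℝ)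
    (i j : Fin n) (hi : (i : ℕ) + 1 = n) :
    (triA n a s * P) i j = 0 := by
  rw [Matrix.mul_apply]
  refine Finset.sum_eq_zero fun b _ => ?_
  have : (b : ℕ) ≠ (i : ℕ) + 1 := by have := b.2; omega
  simp [triA, this]

theorem aux_lower (n : ℕ) (t0 τ : ℝ) (a : ℕ → ℝ → ℝ)
    (Φ : ℝ → Matrix (Fin n) (Fin n) ℝ) (hΦ : IsFundamental n t0 τ (triA n a) Φ) (k : ℕ) :
    ∀ i : Fin n, (i : ℕ) + k + 1 = n → ∀ j : Fin n, j ≤ i → ∀ t ∈ Icc t0 τ,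
      Φ t i j = (1 : Matrix (Fin n) (Fin n) ℝ) i j := by
  induction k with
  | zero =>
    intro i hi j _ t htt
    rw [hΦ.2 t htt i j]
    simp [aux_mul_last n a _ _ i j hi]
  | succ k ih =>
    intro i hi j hj t htt
    rw [hΦ.2 t htt i j]
    have hi' : (i : ℕ) + 1 < n := by omega
    rw [add_eq_left]
    rw [intervalIntegral.integral_congr (g := fun _ => (0 : ℝ))]
    · simp
    intro s hs
    rw [uIcc_of_le htt.1] at hs
    simp only
    have hji : (j : ℕ) ≤ i := hj
    rw [aux_mul_succ n a s _ i j hi', ih ⟨(i : ℕ) + 1, hi'⟩ (by simp only; omega) j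
      (by rw [Fin.le_def]; simp only; omega) s ⟨hs.1, hs.2.trans htt.2⟩, Matrix.one_apply_ne, mul_zero]
    intro h
    have := congrArg Fin.val h
    simp only at this
    omega

theorem stmt10 (n : ℕ) (hn : 2 ≤ n) (t0 τ : ℝ) (ht : t0 < τ)
    (a : ℕ → ℝ → ℝ) (ha : ARegular n t0 τ a)
    (Φ : ℝ → Matrix (Fin n) (Fin n) ℝ) (hΦ : IsFundamental n t0 τ (triA n a) Φ)
    (α : ℕ → ℝ)
    (hα : ∀ l, 2 ≤ l → l ≤ n →
      Filter.Tendsto (a l) (nhdsWithin t0 (Set.Ioi t0)) (nhds (α l))) :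
    ∀ i j : Fin n, i ≤ j →
      Filter.Tendsto (fun t => Φ t i j / (t - t0) ^ ((j : ℕ) - (i : ℕ)))
        (nhdsWithin t0 (Set.Ioi t0))
        (nhds ((∏ l ∈ Finset.Icc ((i : ℕ) + 2) ((j : ℕ) + 1), α l)
          / (Nat.factorial ((j : ℕ) - (i : ℕ))))) := by
  have key : ∀ m : ℕ, ∀ i j : Fin n, (i : ℕ) + m = j →
      Filter.Tendsto (fun t => Φ t i j / (t - t0) ^ m)
        (nhdsWithin t0 (Set.Ioi t0))
        (nhds ((∏ l ∈ Finset.Icc ((i : ℕ) + 2) ((j : ℕ) + 1), α l) / (Nat.factorial m))) := by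
    have hIoo : Ioo t0 τ ∈ 𝓝[>] t0 := Ioo_mem_nhdsGT ht
    intro m
    induction m with
    | zero =>
      intro i j hij
      have hij' : i = j := Fin.ext hij
      subst hij'
      have h1 : Finset.Icc ((i : ℕ) + 2) ((i : ℕ) + 1) = ∅ := Finset.Icc_eq_empty (by omega)
      rw [h1]
      simp only [Finset.prod_empty, Nat.factorial_zero, Nat.cast_one, pow_zero, div_one]
      refine tendsto_const_nhds.congr' ?_
      filter_upwards [hIoo] with t htt
      have hi := i.2
      rw [aux_lower n t0 τ a Φ hΦ (n - 1 - i) i (by omega) i le_rfl t ⟨htt.1.le, htt.2.le⟩]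
      simp
    | succ m ih =>
      intro i j hij
      have hi' : (i : ℕ) + 1 < n := by have := j.2; omega
      have ih' := ih ⟨(i : ℕ) + 1, hi'⟩ j (by simp only; omega)
      have hl := hα ((i : ℕ) + 2) (by omega) (by omega)
      have hmul := hl.mul ih'
      simp only [← mul_div_assoc] at hmul
      have hint : IntervalIntegrable (fun s => a ((i : ℕ) + 2) s * Φ s ⟨(i : ℕ) + 1, hi'⟩ j)
          volume t0 τ := by
        obtain ⟨M, hM⟩ := ha.2 ((i : ℕ) + 2) (by omega) (by omega)
        apply IntervalIntegrable.mul_continuousOn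
        · rw [intervalIntegrable_iff_integrableOn_Icc_of_le ht.le]
          refine Measure.integrableOn_of_bounded (M := M) (by simp)
            (ha.1 ((i : ℕ) + 2) (by omega) (by omega)).aestronglyMeasurable ?_
          exact (ae_restrict_iff' measurableSet_Icc).2 (Eventually.of_forall hM)
        · rw [uIcc_of_le ht.le]
          exact hΦ.1 _ j
      have hlim := aux_int_tendsto t0 τ ht _ hint m _ hmul
      have hval : (∏ l ∈ Finset.Icc ((i : ℕ) + 2) ((j : ℕ) + 1), α l) / ((m + 1).factorial : ℝ)
          = α ((i : ℕ) + 2) * (∏ l ∈ Finset.Icc ((i : ℕ) + 1 + 2) ((j : ℕ) + 1), α l)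
            / (m.factorial : ℝ) / ((m : ℝ) + 1) := by
        have hI : Finset.Icc ((i : ℕ) + 2) ((j : ℕ) + 1)
            = insert ((i : ℕ) + 2) (Finset.Icc ((i : ℕ) + 1 + 2) ((j : ℕ) + 1)) := by
          ext x
          simp only [Finset.mem_Icc, Finset.mem_insert]
          omega
        rw [hI, Finset.prod_insert (by simp), Nat.factorial_succ, div_div]
        push_cast
        rw [mul_comm ((m : ℝ) + 1)]
      rw [hval]
      refine hlim.congr' ?_
      filter_upwards [hIoo] with t htt
      rw [hΦ.2 t ⟨htt.1.le, htt.2.le⟩ i j, Matrix.one_apply_ne, zero_add]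
      · simp only [aux_mul_succ n a _ _ i j hi']
      · intro h
        have := congrArg Fin.val h
        omega
  intro i j hij
  have hij' : (i : ℕ) ≤ j := hij
  exact key ((j : ℕ) - i) i j (by omega)
end
end

section
/- Assume E_j ≠ 0 for every j = 1, …, n. Then for every t ∈ (t0, τ] the matrix Ψ(t) is symmetric positive definite; equivalently, for every t ∈ (t0, τ] and every nonzero v ∈ ℝⁿ one has ∫_{t0}^t (∑_{j=1}^n v_j ε_j(s)(s − t0)^{j−1})² ds > 0. -/
open MeasureTheory Matrix Set Filter Topology

noncomputable section

/-- `c(s)_j = ε_j(s) (s - t0)^(j-1)` (1-based), i.e. exponent `(j : ℕ)` with 0-based `Fin n`. -/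
def cvec (n : ℕ) (t0 : ℝ) (ε : Fin n → ℝ → ℝ) (s : ℝ) : Fin n → ℝ :=
  fun j => ε j s * (s - t0) ^ (j : ℕ)

/-- `Ψ(t) = ∫_{t0}^t c(s) c(s)ᵀ ds` (entrywise integral). -/
def PsiE (n : ℕ) (t0 : ℝ) (ε : Fin n → ℝ → ℝ) (t : ℝ) : Matrix (Fin n) (Fin n) ℝ :=
  fun i j => ∫ s in t0..t, cvec n t0 ε s i * cvec n t0 ε s j

/-- The `ε_j` are measurable and bounded on `(t0, τ]` with limit `E_j` as `s → t0⁺`. -/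
def ERegular (n : ℕ) (t0 τ : ℝ) (ε : Fin n → ℝ → ℝ) (E : Fin n → ℝ) : Prop :=
  (∀ j, Measurable (ε j)) ∧
  (∀ j, ∃ M : ℝ, ∀ s ∈ Set.Ioc t0 τ, |ε j s| ≤ M) ∧
  (∀ j, Filter.Tendsto (ε j) (nhdsWithin t0 (Set.Ioi t0)) (nhds (E j)))

theorem aux_tendsto (n : ℕ) (t0 : ℝ) (ε : Fin n → ℝ → ℝ) (E : Fin n → ℝ)
    (hlim : ∀ j, Filter.Tendsto (ε j) (nhdsWithin t0 (Set.Ioi t0)) (nhds (E j)))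
    (hE : ∀ j, E j ≠ 0) (v : Fin n → ℝ) (hv : v ≠ 0) :
    ∀ᶠ s in 𝓝[>] t0, (∑ j : Fin n, v j * ε j s * (s - t0) ^ (j : ℕ)) ≠ 0 := by
  obtain ⟨k, hk, hmin⟩ : ∃ k, v k ≠ 0 ∧ ∀ j, j < k → v j = 0 := by
    have hex : ∃ k, v k ≠ 0 := Function.ne_iff.mp hv
    obtain ⟨k, hk, hmin⟩ := WellFounded.has_min (wellFounded_lt (α := Fin n)) {k | v k ≠ 0} hex
    exact ⟨k, hk, fun j hj => by_contra fun h => hmin j h hj⟩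
  have hid : Tendsto (fun s : ℝ => s - t0) (𝓝[>] t0) (𝓝 0) := by
    have : Tendsto (fun s : ℝ => s - t0) (𝓝 t0) (𝓝 (t0 - t0)) :=
      (continuous_id.sub continuous_const).tendsto t0
    rw [sub_self] at this
    exact this.mono_left nhdsWithin_le_nhds
  have hg : Tendsto (fun s => ∑ j : Fin n, v j * ε j s * (s - t0) ^ ((j : ℕ) - (k : ℕ)))
      (𝓝[>] t0) (𝓝 (∑ j : Fin n, v j * E j * (0 : ℝ) ^ ((j : ℕ) - (k : ℕ)))) :=
    tendsto_finsetSum _ fun j _ => ((hlim j).const_mul (v j)).mul (hid.pow _)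
  have hsum : (∑ j : Fin n, v j * E j * (0 : ℝ) ^ ((j : ℕ) - (k : ℕ))) = v k * E k := by
    rw [Finset.sum_eq_single k]
    · simp
    · intro j _ hjk
      rcases lt_or_gt_of_ne hjk with h | h
      · simp [hmin j h]
      · have : (j : ℕ) - (k : ℕ) ≠ 0 := by
          have : (k : ℕ) < j := h
          omega
        simp [zero_pow this]
    · simp
  rw [hsum] at hg
  filter_upwards [hg.eventually_ne (mul_ne_zero hk (hE k)), self_mem_nhdsWithin] with s hs hs0
  have hs0 : 0 < s - t0 := sub_pos.mpr hs0
  have : (∑ j : Fin n, v j * ε j s * (s - t0) ^ (j : ℕ)) = (s - t0) ^ (k : ℕ) *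
      ∑ j : Fin n, v j * ε j s * (s - t0) ^ ((j : ℕ) - (k : ℕ)) := by
    rw [Finset.mul_sum]
    refine Finset.sum_congr rfl fun j _ => ?_
    rcases lt_or_ge j k with h | h
    · simp [hmin j h]
    · have h' : (k : ℕ) ≤ j := h
      conv_lhs => rw [← Nat.add_sub_cancel' h', pow_add]
      ring
  rw [this]
  exact mul_ne_zero (pow_pos hs0 _).ne' hs

theorem aux_int (n : ℕ) (t0 τ : ℝ) (ε : Fin n → ℝ → ℝ) (E : Fin n → ℝ)
    (hreg : ERegular n t0 τ ε E) (t : ℝ) (ht : t ∈ Set.Ioc t0 τ) (i j : Fin n) :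
    IntervalIntegrable (fun s => cvec n t0 ε s i * cvec n t0 ε s j) volume t0 t := by
  obtain ⟨hm, hb, -⟩ := hreg
  have hc : ∀ i, ∃ M : ℝ, ∀ s ∈ Set.Ioc t0 t, |cvec n t0 ε s i| ≤ M := by
    intro i
    obtain ⟨M, hM⟩ := hb i
    refine ⟨M * (t - t0) ^ (i : ℕ), fun s hs => ?_⟩
    have h1 := hM s ⟨hs.1, hs.2.trans ht.2⟩
    have h0 : 0 ≤ s - t0 := sub_nonneg.mpr hs.1.le
    have h2 : (s - t0) ^ (i : ℕ) ≤ (t - t0) ^ (i : ℕ) :=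
      pow_le_pow_left₀ h0 (by linarith [hs.2]) _
    unfold cvec
    rw [abs_mul, abs_of_nonneg (pow_nonneg h0 _)]
    exact mul_le_mul h1 h2 (pow_nonneg h0 _) ((abs_nonneg _).trans h1)
  have hcm : ∀ i, Measurable (fun s => cvec n t0 ε s i) := fun i =>
    (hm i).mul ((measurable_id.sub_const t0).pow_const _)
  obtain ⟨A, hA⟩ := hc i
  obtain ⟨B, hB⟩ := hc j
  rw [intervalIntegrable_iff_integrableOn_Ioc_of_le ht.1.le]
  refine Measure.integrableOn_of_bounded (M := A * B) (by simp)
    ((hcm i).mul (hcm j)).aestronglyMeasurable ?_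
  filter_upwards [ae_restrict_mem measurableSet_Ioc] with s hs
  rw [Real.norm_eq_abs, abs_mul]
  exact mul_le_mul (hA s hs) (hB s hs) (abs_nonneg _) ((abs_nonneg _).trans (hA s hs))

theorem aux_sq (n : ℕ) (t0 : ℝ) (ε : Fin n → ℝ → ℝ) (v : Fin n → ℝ) (s : ℝ) :
    (∑ j : Fin n, v j * ε j s * (s - t0) ^ (j : ℕ)) ^ 2 =
      ∑ i, ∑ j, v i * v j * (cvec n t0 ε s i * cvec n t0 ε s j) := by
  rw [sq, Finset.sum_mul_sum]
  refine Finset.sum_congr rfl fun i _ => Finset.sum_congr rfl fun j _ => ?_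
  unfold cvec
  ring

theorem stmt11 (n : ℕ) (hn : 1 ≤ n) (t0 τ : ℝ) (ht : t0 < τ)
    (ε : Fin n → ℝ → ℝ) (E : Fin n → ℝ) (hreg : ERegular n t0 τ ε E)
    (hE : ∀ j, E j ≠ 0) :
    ∀ t ∈ Set.Ioc t0 τ,
      (PsiE n t0 ε t).PosDef ∧
      ∀ v : Fin n → ℝ, v ≠ 0 →
        0 < ∫ s in t0..t, (∑ j : Fin n, v j * ε j s * (s - t0) ^ (j : ℕ)) ^ 2 := by
  intro t htt
  have hint : ∀ v : Fin n → ℝ, IntervalIntegrable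
      (fun s => (∑ j : Fin n, v j * ε j s * (s - t0) ^ (j : ℕ)) ^ 2) volume t0 t := by
    intro v
    simp_rw [aux_sq]
    have := IntervalIntegrable.sum (μ := volume) (a := t0) (b := t) Finset.univ
      (f := fun i s => ∑ j, v i * v j * (cvec n t0 ε s i * cvec n t0 ε s j)) fun i _ => by
        have := IntervalIntegrable.sum (μ := volume) (a := t0) (b := t) Finset.univ
          (f := fun j s => v i * v j * (cvec n t0 ε s i * cvec n t0 ε s j)) fun j _ =>
            (aux_int n t0 τ ε E hreg t htt i j).const_mul (v i * v j)
        simpa [Finset.sum_fn] using this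
    simpa [Finset.sum_fn] using this
  have hpos : ∀ v : Fin n → ℝ, v ≠ 0 →
        0 < ∫ s in t0..t, (∑ j : Fin n, v j * ε j s * (s - t0) ^ (j : ℕ)) ^ 2 := by
    intro v hv
    rw [intervalIntegral.integral_pos_iff_support_of_nonneg_ae
      (Eventually.of_forall fun s => sq_nonneg _) (hint v)]
    refine ⟨htt.1, ?_⟩
    obtain ⟨u, hu, hsub⟩ := mem_nhdsGT_iff_exists_Ioo_subset.mp
      (aux_tendsto n t0 ε E hreg.2.2 hE v hv)
    have hu : t0 < u := hu
    have h1 : 0 < volume (Set.Ioo t0 (min u t)) := by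
      simp [hu, htt.1]
    refine h1.trans_le (measure_mono fun s hs => ⟨?_, hs.1, (hs.2.trans_le (min_le_right _ _)).le⟩)
    have : s ∈ Set.Ioo t0 u := ⟨hs.1, hs.2.trans_le (min_le_left _ _)⟩
    exact pow_ne_zero 2 (hsub this)
  refine ⟨Matrix.PosDef.of_dotProduct_mulVec_pos ?_ ?_, hpos⟩
  · ext i j
    simp [PsiE, mul_comm]
  · intro v hv
    have h := hpos v hv
    simp_rw [aux_sq] at h
    rw [intervalIntegral.integral_finsetSum] at h
    · refine h.trans_eq ?_
      simp only [dotProduct, mulVec, star_trivial, Finset.mul_sum]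
      refine Finset.sum_congr rfl fun i _ => ?_
      rw [intervalIntegral.integral_finsetSum]
      · refine Finset.sum_congr rfl fun j _ => ?_
        rw [intervalIntegral.integral_const_mul]
        unfold PsiE
        ring
      · exact fun j _ => (aux_int n t0 τ ε E hreg t htt i j).const_mul (v i * v j)
    · intro i _
      have := IntervalIntegrable.sum (μ := volume) (a := t0) (b := t) Finset.univ
        (f := fun j s => v i * v j * (cvec n t0 ε s i * cvec n t0 ε s j)) fun j _ =>
          (aux_int n t0 τ ε E hreg t htt i j).const_mul (v i * v j)
      simpa [Finset.sum_fn] using this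
end
end

section
/- For all indices 1 ≤ i, j ≤ n: lim_{t→t0⁺} Ψ(t)_{ij} / (t − t0)^{i+j−1} = E_i E_j / (i + j − 1). -/
open MeasureTheory Matrix Set Filter Topology

noncomputable section

theorem stmt12 (n : ℕ) (hn : 1 ≤ n) (t0 τ : ℝ) (ht : t0 < τ)
    (ε : Fin n → ℝ → ℝ) (E : Fin n → ℝ) (hreg : ERegular n t0 τ ε E) :
    ∀ i j : Fin n,
      Filter.Tendsto (fun t => PsiE n t0 ε t i j / (t - t0) ^ ((i : ℕ) + (j : ℕ) + 1))
        (nhdsWithin t0 (Set.Ioi t0))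
        (nhds (E i * E j / (((i : ℕ) + (j : ℕ) + 1 : ℕ) : ℝ))) := by
  intro i j
  obtain ⟨hmeas, -, hlim⟩ := hreg
  have hg : Tendsto (fun s => ε i s * ε j s) (𝓝[>] t0) (𝓝 (E i * E j)) := (hlim i).mul (hlim j)
  rw [Metric.tendsto_nhds] at hg ⊢
  intro δ hδ
  have h1 := hg (δ / 2) (by positivity)
  obtain ⟨u, hu, hsub⟩ := mem_nhdsGT_iff_exists_Ioo_subset.1 h1
  filter_upwards [Ioo_mem_nhdsGT hu] with t htm
  set k : ℕ := (i : ℕ) + (j : ℕ) with hk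
  set L : ℝ := E i * E j with hL
  have htp : 0 < t - t0 := sub_pos.2 htm.1
  have hb : ∀ s ∈ Set.uIoc t0 t,
      ‖(ε i s * ε j s - L) * (s - t0) ^ k‖ ≤ δ / 2 * (t - t0) ^ k := by
    intro s hs
    rw [Set.uIoc_of_le htm.1.le] at hs
    have h2 : dist (ε i s * ε j s) L < δ / 2 := hsub ⟨hs.1, lt_of_le_of_lt hs.2 htm.2⟩
    rw [Real.dist_eq] at h2
    have h3 : 0 ≤ s - t0 := by linarith [hs.1]
    rw [norm_mul, Real.norm_eq_abs, Real.norm_eq_abs, abs_of_nonneg (pow_nonneg h3 k)]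
    have h4 : (s - t0) ^ k ≤ (t - t0) ^ k := pow_le_pow_left₀ h3 (by linarith [hs.2]) k
    exact mul_le_mul h2.le h4 (pow_nonneg h3 k) (by positivity)
  have hint : IntervalIntegrable (fun s => (ε i s * ε j s - L) * (s - t0) ^ k) volume t0 t := by
    refine (intervalIntegrable_const (c := δ / 2 * (t - t0) ^ k)).mono_fun ?_ ?_
    · have := hmeas i
      have := hmeas j
      exact Measurable.aestronglyMeasurable (by fun_prop)
    · refine (ae_restrict_mem measurableSet_uIoc).mono fun s hs => ?_
      exact (hb s hs).trans (le_abs_self _)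
  have hint2 : IntervalIntegrable (fun s => L * (s - t0) ^ k) volume t0 t :=
    Continuous.intervalIntegrable (by fun_prop) _ _
  have hbound := intervalIntegral.norm_integral_le_of_norm_le_const hb
  have hpoly : ∫ s in t0..t, L * (s - t0) ^ k = L * ((t - t0) ^ (k + 1) / ((k + 1 : ℕ) : ℝ)) := by
    rw [intervalIntegral.integral_const_mul,
      intervalIntegral.integral_comp_sub_right (fun x => x ^ k) t0, integral_pow]
    simp
  have hPsi : PsiE n t0 ε t i j = (∫ s in t0..t, (ε i s * ε j s - L) * (s - t0) ^ k)
      + L * ((t - t0) ^ (k + 1) / ((k + 1 : ℕ) : ℝ)) := by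
    rw [← hpoly, ← intervalIntegral.integral_add hint hint2]
    unfold PsiE cvec
    refine intervalIntegral.integral_congr fun s _ => ?_
    simp only [hk, pow_add]
    ring
  have hp : 0 < (t - t0) ^ (k + 1) := pow_pos htp _
  have hk0 : ((k + 1 : ℕ) : ℝ) ≠ 0 := by positivity
  rw [hPsi, Real.dist_eq]
  have heq : ∀ I : ℝ, (I + L * ((t - t0) ^ (k + 1) / ((k + 1 : ℕ) : ℝ))) / (t - t0) ^ (k + 1)
      - L / ((k + 1 : ℕ) : ℝ) = I / (t - t0) ^ (k + 1) := by
    intro I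
    generalize (t - t0) ^ (k + 1) = p at *
    field_simp
    ring
  rw [heq, abs_div, abs_of_pos hp, div_lt_iff₀ hp]
  rw [Real.norm_eq_abs, abs_of_pos htp, mul_assoc, ← pow_succ] at hbound
  nlinarith
end
end

section
/- One has lim_{t→t0⁺} det Ψ(t) / (t − t0)^{n²} = (∏_{j=1}^{n} E_j²) · det H_n, where H_n is the n×n Hilbert-type matrix with entries (H_n)_{ij} = 1/(i + j − 1). -/
open MeasureTheory Matrix Set Filter Topology

noncomputable section

theorem aux_scalar (t0 τ : ℝ) (ht : t0 < τ) (g : ℝ → ℝ) (L M : ℝ) (hm : Measurable g)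
    (hb : ∀ s ∈ Set.Ioc t0 τ, |g s| ≤ M) (hl : Tendsto g (𝓝[>] t0) (𝓝 L)) (k : ℕ) :
    Tendsto (fun t => (∫ s in t0..t, g s * (s - t0) ^ k) / (t - t0) ^ (k + 1)) (𝓝[>] t0)
      (𝓝 (L * (1 / ((k + 1 : ℕ) : ℝ)))) := by
  have key : Tendsto (fun t => ∫ u in (0:ℝ)..1, g (t0 + (t - t0) * u) * u ^ k) (𝓝[>] t0)
      (𝓝 (∫ u in (0:ℝ)..1, L * u ^ k)) := by
    apply intervalIntegral.tendsto_integral_filter_of_dominated_convergence (fun _ => M)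
    · refine Eventually.of_forall fun t => ?_
      have : Measurable (fun u : ℝ => g (t0 + (t - t0) * u) * u ^ k) := by fun_prop
      exact this.aestronglyMeasurable
    · filter_upwards [Ioc_mem_nhdsGT ht] with t htt
      refine Eventually.of_forall fun u hu => ?_
      rw [uIoc_of_le zero_le_one] at hu
      have h1 : |g (t0 + (t - t0) * u)| ≤ M := by
        apply hb
        have := htt.1
        have := htt.2
        have := hu.1
        have := hu.2
        constructor
        · have : 0 < (t - t0) * u := mul_pos (by linarith) (by linarith)
          linarith
        · nlinarith
      have h2 : |u ^ k| ≤ 1 := by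
        rw [abs_of_nonneg (pow_nonneg hu.1.le k)]
        exact pow_le_one₀ hu.1.le hu.2
      rw [Real.norm_eq_abs, abs_mul]
      calc _ ≤ M * 1 := mul_le_mul h1 h2 (abs_nonneg _) ((abs_nonneg _).trans h1)
        _ = M := mul_one M
    · exact intervalIntegrable_const
    · refine Eventually.of_forall fun u hu => ?_
      rw [uIoc_of_le zero_le_one] at hu
      refine Tendsto.mul_const _ (hl.comp ?_)
      apply tendsto_nhdsWithin_of_tendsto_nhds_of_eventually_within
      · have : Continuous (fun t : ℝ => t0 + (t - t0) * u) := by fun_prop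
        have h := this.tendsto t0
        simp only [sub_self, zero_mul, add_zero] at h
        exact h.mono_left nhdsWithin_le_nhds
      · filter_upwards [self_mem_nhdsWithin] with t htt
        have : 0 < (t - t0) * u := mul_pos (sub_pos.2 htt) hu.1
        simp only [mem_Ioi]
        linarith
  have hval : (∫ u in (0:ℝ)..1, L * u ^ k) = L * (1 / ((k + 1 : ℕ) : ℝ)) := by
    simp [integral_pow]
  rw [hval] at key
  refine key.congr' ?_
  filter_upwards [self_mem_nhdsWithin] with t htt
  have hpos : 0 < t - t0 := sub_pos.2 htt
  have h := intervalIntegral.smul_integral_comp_add_mul (a := 0) (b := 1)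
    (fun s => g s * (s - t0) ^ k) (t - t0) t0
  simp only [mul_zero, add_zero, mul_one, add_sub_cancel, add_sub_cancel_left, smul_eq_mul,
    mul_pow] at h
  rw [← h]
  have h3 : (∫ u in (0:ℝ)..1, g (t0 + (t - t0) * u) * ((t - t0) ^ k * u ^ k))
      = (t - t0) ^ k * ∫ u in (0:ℝ)..1, g (t0 + (t - t0) * u) * u ^ k := by
    rw [← intervalIntegral.integral_const_mul]
    congr 1
    ext u
    ring
  rw [h3, eq_div_iff (by positivity)]
  ring

theorem aux_prod_s13 (n : ℕ) (h : ℝ) :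
    (∏ i : Fin n, h ^ (i : ℕ)) * (∏ i : Fin n, h ^ ((i : ℕ) + 1)) = h ^ (n ^ 2) := by
  induction n with
  | zero => simp
  | succ n ih =>
    rw [Fin.prod_univ_castSucc, Fin.prod_univ_castSucc]
    simp only [Fin.val_castSucc, Fin.val_last]
    calc _ = ((∏ i : Fin n, h ^ (i : ℕ)) * (∏ i : Fin n, h ^ ((i : ℕ) + 1)))
          * (h ^ n * h ^ (n + 1)) := by ring
      _ = _ := by rw [ih]; ring

theorem stmt13 (n : ℕ) (hn : 1 ≤ n) (t0 τ : ℝ) (ht : t0 < τ)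
    (ε : Fin n → ℝ → ℝ) (E : Fin n → ℝ) (hreg : ERegular n t0 τ ε E) :
    Filter.Tendsto (fun t => (PsiE n t0 ε t).det / (t - t0) ^ (n ^ 2))
      (nhdsWithin t0 (Set.Ioi t0))
      (nhds ((∏ j : Fin n, (E j) ^ 2) *
        Matrix.det (Matrix.of fun i j : Fin n =>
          (1 : ℝ) / (((i : ℕ) + (j : ℕ) + 1 : ℕ) : ℝ)))) := by
  obtain ⟨hm, hb, hl⟩ := hreg
  have hentry : ∀ i j : Fin n, Tendsto
      (fun t => PsiE n t0 ε t i j / (t - t0) ^ ((i : ℕ) + (j : ℕ) + 1)) (𝓝[>] t0)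
      (𝓝 (E i * E j * (1 / (((i : ℕ) + (j : ℕ) + 1 : ℕ) : ℝ)))) := by
    intro i j
    obtain ⟨M, hM⟩ := hb i
    obtain ⟨N, hN⟩ := hb j
    have := aux_scalar t0 τ ht (fun s => ε i s * ε j s) (E i * E j) (M * N)
      ((hm i).mul (hm j))
      (fun s hs => by
        rw [abs_mul]
        exact mul_le_mul (hM s hs) (hN s hs) (abs_nonneg _) ((abs_nonneg _).trans (hM s hs)))
      ((hl i).mul (hl j)) (i + j)
    refine this.congr fun t => ?_
    congr 1
    unfold PsiE cvec
    congr 1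
    ext s
    ring
  have hdet : Tendsto (fun t => (Matrix.of fun i j : Fin n =>
      PsiE n t0 ε t i j / (t - t0) ^ ((i : ℕ) + (j : ℕ) + 1)).det) (𝓝[>] t0)
      (𝓝 (Matrix.of fun i j : Fin n =>
        E i * E j * (1 / (((i : ℕ) + (j : ℕ) + 1 : ℕ) : ℝ))).det) := by
    simp only [Matrix.det_apply]
    refine tendsto_finsetSum _ fun σ _ => Tendsto.const_smul ?_ _
    exact tendsto_finsetProd _ fun i _ => hentry _ _
  have hlim : (Matrix.of fun i j : Fin n =>
        E i * E j * (1 / (((i : ℕ) + (j : ℕ) + 1 : ℕ) : ℝ))).det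
      = (∏ j : Fin n, (E j) ^ 2) * Matrix.det (Matrix.of fun i j : Fin n =>
          (1 : ℝ) / (((i : ℕ) + (j : ℕ) + 1 : ℕ) : ℝ)) := by
    have h1 := Matrix.det_mul_row E (Matrix.of fun i j : Fin n =>
          (1 : ℝ) / (((i : ℕ) + (j : ℕ) + 1 : ℕ) : ℝ))
    have h2 := Matrix.det_mul_column E (Matrix.of fun i j : Fin n => E j *
      (Matrix.of fun i j : Fin n => (1 : ℝ) / (((i : ℕ) + (j : ℕ) + 1 : ℕ) : ℝ)) i j)
    rw [h1, ← mul_assoc, ← Finset.prod_mul_distrib] at h2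
    simp only [← sq] at h2
    rw [← h2]
    congr 1
    ext i j
    simp only [Matrix.of_apply]
    ring
  rw [hlim] at hdet
  refine hdet.congr' ?_
  filter_upwards [self_mem_nhdsWithin] with t htt
  have hpos : 0 < t - t0 := sub_pos.2 htt
  rw [eq_div_iff (by positivity), ← aux_prod_s13, mul_comm, mul_assoc, ← Matrix.det_mul_row,
    ← Matrix.det_mul_column]
  congr 1
  ext i j
  simp only [Matrix.of_apply]
  field_simp
  ring
end
end

section
/- Assume E_j ≠ 0 for every j = 1, …, n. Then there exist τ' ∈ (t0, τ] and a constant K > 0 such that for every t ∈ (t0, τ'] the matrix Ψ(t) is invertible and its inverse satisfies the entrywise bounds |(Ψ(t)⁻¹)_{ij}| ≤ K (t − t0)^{1−i−j} for all 1 ≤ i, j ≤ n. -/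
open MeasureTheory Matrix Set Filter Topology

noncomputable section

/-- The limit matrix `E_i E_j / (i+j+1)`. -/
def limMat (n : ℕ) (E : Fin n → ℝ) : Matrix (Fin n) (Fin n) ℝ :=
  fun i j => E i * E j / ((i : ℕ) + (j : ℕ) + 1 : ℝ)

lemma limMat_det_ne (n : ℕ) (E : Fin n → ℝ) (hE : ∀ j, E j ≠ 0) :
    (limMat n E).det ≠ 0 := by
  intro h0
  obtain ⟨v, hv, hmv⟩ := Matrix.exists_mulVec_eq_zero_iff.mpr h0
  apply hv
  let p : Polynomial ℝ := ∑ j : Fin n, Polynomial.monomial (j : ℕ) (v j * E j)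
  have hev : ∀ x : ℝ, p.eval x = ∑ j : Fin n, v j * E j * x ^ (j : ℕ) := by
    intro x
    simp [p, Polynomial.eval_finsetSum, Polynomial.eval_monomial]
  have hint : ∫ x in (0:ℝ)..1, p.eval x * p.eval x = 0 := by
    have h1 : ∀ x : ℝ, p.eval x * p.eval x =
        ∑ i : Fin n, ∑ j : Fin n, v i * E i * (v j * E j) * x ^ ((i : ℕ) + (j : ℕ)) := by
      intro x
      rw [hev, Finset.sum_mul_sum]
      refine Finset.sum_congr rfl fun i _ => Finset.sum_congr rfl fun j _ => ?_
      rw [pow_add]; ring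
    simp_rw [h1]
    rw [intervalIntegral.integral_finsetSum]
    · have h2 : ∀ i : Fin n, (∫ x in (0:ℝ)..1, ∑ j : Fin n,
          v i * E i * (v j * E j) * x ^ ((i : ℕ) + (j : ℕ))) = v i * (limMat n E *ᵥ v) i := by
        intro i
        rw [intervalIntegral.integral_finsetSum]
        · simp only [Matrix.mulVec, dotProduct, Finset.mul_sum]
          refine Finset.sum_congr rfl fun j _ => ?_
          rw [intervalIntegral.integral_const_mul, integral_pow]
          simp only [limMat]
          push_cast
          simp
          ring
        · intro j _
          exact (by fun_prop : Continuous fun x : ℝ =>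
            v i * E i * (v j * E j) * x ^ ((i : ℕ) + (j : ℕ))).intervalIntegrable _ _
      simp [h2, hmv]
    · intro i _
      exact (by fun_prop : Continuous fun x : ℝ => ∑ j : Fin n,
            v i * E i * (v j * E j) * x ^ ((i : ℕ) + (j : ℕ))).intervalIntegrable _ _
  have hroot : ∀ x ∈ Set.Icc (0:ℝ) 1, p.eval x = 0 := by
    intro x hx
    by_contra hne
    have hpos := intervalIntegral.integral_pos (a := (0:ℝ)) (b := 1)
      (f := fun x => p.eval x * p.eval x) one_pos
      (p.continuous.mul p.continuous).continuousOn (fun y _ => mul_self_nonneg _)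
      ⟨x, hx, mul_self_pos.mpr hne⟩
    exact hpos.ne' hint
  have hp : p = 0 := by
    apply Polynomial.eq_zero_of_infinite_isRoot
    exact (Set.Icc_infinite (one_pos : (0:ℝ) < 1)).mono fun x hx => hroot x hx
  funext j
  have hc : p.coeff (j : ℕ) = v j * E j := by
    simp [p, Polynomial.coeff_monomial, Fin.val_inj]
  rw [hp] at hc
  simpa [hE j] using hc.symm

lemma psi_tendsto (n : ℕ) (t0 τ : ℝ) (ht : t0 < τ)
    (ε : Fin n → ℝ → ℝ) (E : Fin n → ℝ) (hreg : ERegular n t0 τ ε E) (i j : Fin n) :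
    Tendsto (fun t => PsiE n t0 ε t i j / (t - t0) ^ ((i : ℕ) + (j : ℕ) + 1))
      (𝓝[>] t0) (𝓝 (limMat n E i j)) := by
  obtain ⟨hm, hb, hl⟩ := hreg
  set k : ℕ := (i : ℕ) + (j : ℕ) with hk
  have hg := (hl i).mul (hl j)
  rw [Metric.tendsto_nhds] at hg ⊢
  intro δ hδ
  have h1 := hg (δ / 2) (by positivity)
  rw [eventually_nhdsWithin_iff, Metric.eventually_nhds_iff] at h1
  obtain ⟨r, hr, h1⟩ := h1
  have h2 : ∀ᶠ t in 𝓝[>] t0, t ∈ Set.Ioo t0 (min τ (t0 + r)) :=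
    Ioo_mem_nhdsGT (lt_min ht (by linarith))
  filter_upwards [h2] with t htt
  obtain ⟨htl, htr⟩ := htt
  have htτ : t < τ := htr.trans_le (min_le_left _ _)
  have htr' : t < t0 + r := htr.trans_le (min_le_right _ _)
  have hh : 0 < t - t0 := sub_pos.mpr htl
  have hPsi : PsiE n t0 ε t i j = ∫ s in t0..t, ε i s * ε j s * (s - t0) ^ k := by
    unfold PsiE cvec
    congr 1
    funext s
    rw [hk, pow_add]; ring
  have hpowint : ∫ s in t0..t, E i * E j * (s - t0) ^ k
      = limMat n E i j * (t - t0) ^ (k + 1) := by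
    rw [intervalIntegral.integral_const_mul,
      intervalIntegral.integral_comp_sub_right (fun x : ℝ => x ^ k), integral_pow]
    simp only [limMat, hk]
    push_cast
    simp
    ring
  have hI2 : IntervalIntegrable (fun s => E i * E j * (s - t0) ^ k) volume t0 t :=
    (by fun_prop : Continuous fun s : ℝ => E i * E j * (s - t0) ^ k).intervalIntegrable _ _
  have hbd : ∀ s ∈ Set.Ioc t0 t, |ε i s * ε j s - E i * E j| ≤ δ / 2 := by
    intro s hs
    have := h1 (y := s) (by rw [Real.dist_eq, abs_of_pos] <;> linarith [hs.1, hs.2]) hs.1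
    rw [Real.dist_eq] at this
    exact this.le
  have hbd2 : ∀ s ∈ Set.uIoc t0 t,
      ‖ε i s * ε j s * (s - t0) ^ k - E i * E j * (s - t0) ^ k‖ ≤ δ / 2 * (t - t0) ^ k := by
    intro s hs
    rw [Set.uIoc_of_le htl.le] at hs
    rw [← sub_mul, norm_mul, Real.norm_eq_abs, Real.norm_eq_abs,
      abs_of_nonneg (pow_nonneg (sub_nonneg.mpr hs.1.le) k)]
    have := hs.1
    have := hs.2
    gcongr
    exact hbd s hs
  have hI1 : IntervalIntegrable (fun s => ε i s * ε j s * (s - t0) ^ k) volume t0 t := by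
    have hd : IntervalIntegrable (fun s => ε i s * ε j s * (s - t0) ^ k
        - E i * E j * (s - t0) ^ k) volume t0 t := by
      refine (intervalIntegrable_const (c := δ / 2 * (t - t0) ^ k)).mono_fun' ?_ ?_
      · have := hm i
        have := hm j
        exact (by fun_prop : Measurable fun s => ε i s * ε j s * (s - t0) ^ k
          - E i * E j * (s - t0) ^ k).aestronglyMeasurable
      · exact (ae_restrict_iff' measurableSet_uIoc).mpr (ae_of_all _ hbd2)
    simpa using hd.add hI2
  have hdiff : |PsiE n t0 ε t i j - limMat n E i j * (t - t0) ^ (k + 1)|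
      ≤ δ / 2 * (t - t0) ^ (k + 1) := by
    rw [hPsi, ← hpowint, ← intervalIntegral.integral_sub hI1 hI2]
    have := intervalIntegral.norm_integral_le_of_norm_le_const hbd2
    rw [abs_of_pos hh, Real.norm_eq_abs] at this
    rw [pow_succ, ← mul_assoc]
    exact this
  have hp : 0 < (t - t0) ^ (k + 1) := by positivity
  rw [Real.dist_eq]
  have : PsiE n t0 ε t i j / (t - t0) ^ (k + 1) - limMat n E i j =
      (PsiE n t0 ε t i j - limMat n E i j * (t - t0) ^ (k + 1)) / (t - t0) ^ (k + 1) := by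
    field_simp
  rw [this, abs_div, abs_of_pos hp, div_lt_iff₀ hp]
  nlinarith

theorem stmt14 (n : ℕ) (hn : 1 ≤ n) (t0 τ : ℝ) (ht : t0 < τ)
    (ε : Fin n → ℝ → ℝ) (E : Fin n → ℝ) (hreg : ERegular n t0 τ ε E)
    (hE : ∀ j, E j ≠ 0) :
    ∃ τ' ∈ Set.Ioc t0 τ, ∃ K > (0:ℝ), ∀ t ∈ Set.Ioc t0 τ',
      IsUnit (PsiE n t0 ε t) ∧
      ∀ i j : Fin n,
        |(PsiE n t0 ε t)⁻¹ i j| ≤ K * ((t - t0) ^ ((i : ℕ) + (j : ℕ) + 1))⁻¹ := by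
  let H : ℝ → Matrix (Fin n) (Fin n) ℝ := fun t => Matrix.of fun i j =>
    PsiE n t0 ε t i j / (t - t0) ^ ((i : ℕ) + (j : ℕ) + 1)
  have hH : Tendsto H (𝓝[>] t0) (𝓝 (limMat n E)) :=
    tendsto_pi_nhds.mpr fun i => tendsto_pi_nhds.mpr fun j =>
      psi_tendsto n t0 τ ht ε E hreg i j
  have hdet0 := limMat_det_ne n E hE
  have hdet : Tendsto (fun t => (H t).det) (𝓝[>] t0) (𝓝 (limMat n E).det) :=
    ((Continuous.matrix_det continuous_id).tendsto _).comp hH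
  have hadj : Tendsto (fun t => (H t).adjugate) (𝓝[>] t0) (𝓝 (limMat n E).adjugate) :=
    ((Continuous.matrix_adjugate continuous_id).tendsto _).comp hH
  have hent : ∀ i j, Tendsto (fun t => (H t)⁻¹ i j) (𝓝[>] t0)
      (𝓝 ((limMat n E).det⁻¹ * (limMat n E).adjugate i j)) := by
    intro i j
    have h3 := (hdet.inv₀ hdet0).mul (tendsto_pi_nhds.mp (tendsto_pi_nhds.mp hadj i) j)
    refine h3.congr fun t => ?_
    rw [Matrix.inv_def, Ring.inverse_eq_inv', Matrix.smul_apply, smul_eq_mul]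
  let K : ℝ := 1 + ∑ i : Fin n, ∑ j : Fin n,
    |(limMat n E).det⁻¹ * (limMat n E).adjugate i j|
  have hKb : ∀ i j, |(limMat n E).det⁻¹ * (limMat n E).adjugate i j| < K := by
    intro i j
    have a1 := Finset.single_le_sum (f := fun j =>
      |(limMat n E).det⁻¹ * (limMat n E).adjugate i j|) (fun _ _ => abs_nonneg _)
      (Finset.mem_univ j)
    have a2 := Finset.single_le_sum (f := fun i => ∑ j : Fin n,
      |(limMat n E).det⁻¹ * (limMat n E).adjugate i j|)
      (fun _ _ => Finset.sum_nonneg fun _ _ => abs_nonneg _) (Finset.mem_univ i)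
    simp only [K]
    linarith
  have hKpos : 0 < K := by
    have : 0 ≤ ∑ i : Fin n, ∑ j : Fin n,
      |(limMat n E).det⁻¹ * (limMat n E).adjugate i j| :=
      Finset.sum_nonneg fun _ _ => Finset.sum_nonneg fun _ _ => abs_nonneg _
    simp only [K]
    linarith
  have hev : ∀ᶠ t in 𝓝[>] t0, (H t).det ≠ 0 ∧ ∀ i j, |(H t)⁻¹ i j| < K := by
    refine (hdet.eventually_ne hdet0).and ?_
    rw [eventually_all]
    intro i
    rw [eventually_all]
    intro j
    exact (hent i j).abs.eventually_lt_const (hKb i j)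
  obtain ⟨u, hu, hsub⟩ := (mem_nhdsGT_iff_exists_Ioc_subset).mp hev
  refine ⟨min u τ, ⟨lt_min hu ht, min_le_right _ _⟩, K, hKpos, ?_⟩
  intro t htt
  obtain ⟨hd, hb⟩ := hsub ⟨htt.1, htt.2.trans (min_le_left _ _)⟩
  have hh : 0 < t - t0 := sub_pos.mpr htt.1
  have hne : t - t0 ≠ 0 := hh.ne'
  let G : Matrix (Fin n) (Fin n) ℝ := Matrix.of fun i j =>
    (H t)⁻¹ i j / (t - t0) ^ ((i : ℕ) + (j : ℕ) + 1)
  have hmul : PsiE n t0 ε t * G = 1 := by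
    have h1 : H t * (H t)⁻¹ = 1 := Matrix.mul_nonsing_inv _ (isUnit_iff_ne_zero.mpr hd)
    ext i j
    have h2 : (PsiE n t0 ε t * G) i j =
        (t - t0) ^ (i : ℕ) / (t - t0) ^ (j : ℕ) * (H t * (H t)⁻¹) i j := by
      rw [Matrix.mul_apply, Matrix.mul_apply, Finset.mul_sum]
      refine Finset.sum_congr rfl fun l _ => ?_
      have : PsiE n t0 ε t i l = H t i l * (t - t0) ^ ((i : ℕ) + (l : ℕ) + 1) := by
        simp only [H, Matrix.of_apply]
        field_simp
      rw [this]
      simp only [G, Matrix.of_apply]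
      field_simp
      ring
    rw [h2, h1]
    by_cases hij : i = j
    · subst hij
      simp [hne]
    · simp [hij]
  refine ⟨IsUnit.of_mul_eq_one _ hmul, fun i j => ?_⟩
  rw [Matrix.inv_eq_right_inv hmul]
  simp only [G, Matrix.of_apply]
  rw [abs_div, abs_of_pos (pow_pos hh _), div_eq_mul_inv]
  have := (hb i j).le
  gcongr
end
end

section
/- Let R > 0 and L > 0 be such that |f_n(t, z1) − f_n(t, z2)| ≤ L |z1 − z2| for all t ∈ [t0, τ] and all z1, z2 ∈ ℝⁿ with |z1|, |z2| ≤ R. Then there exists a constant K > 0 such that for every t ∈ (t0, τ], every pair of continuous functions d1, d2 : [t0, t] → ℝⁿ with sup norms at most R, and every component index i = 1, …, n: |(Ξ(t; d1) − Ξ(t; d2))_i| ≤ K (t − t0)^{n+i} · sup_{s ∈ [t0,t]} |d1(s) − d2(s)|. -/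
open MeasureTheory Matrix Set Filter Topology

noncomputable section

/-- The output row vector `C = (1, 0, …, 0)`. -/
def triC (n : ℕ) : Matrix (Fin 1) (Fin n) ℝ :=
  Matrix.of fun _ j => if (j : ℕ) = 0 then 1 else 0

/-- The triangular vector field `g(t,x) = (f_1(t), …, f_{n-1}(t), f_n(t,x))ᵀ`. -/
def triG (n : ℕ) (f : ℕ → ℝ → ℝ) (fn : ℝ → (Fin n → ℝ) → ℝ)
    (t : ℝ) (x : Fin n → ℝ) : Fin n → ℝ :=
  fun i => if (i : ℕ) = n - 1 then fn t x else f ((i : ℕ) + 1) t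

/-- Regularity of the triangular data: `a_l`, `f_l` measurable and bounded on `[t0,τ]`,
`f_n` measurable in `t` and continuous in `x`. -/
def TriRegular (n : ℕ) (t0 τ : ℝ) (a f : ℕ → ℝ → ℝ)
    (fn : ℝ → (Fin n → ℝ) → ℝ) : Prop :=
  (∀ l, 2 ≤ l → l ≤ n → Measurable (a l)) ∧
  (∀ l, 2 ≤ l → l ≤ n → ∃ M : ℝ, ∀ t ∈ Set.Icc t0 τ, |a l t| ≤ M) ∧
  (∀ l, 1 ≤ l → l ≤ n - 1 → Measurable (f l)) ∧
  (∀ l, 1 ≤ l → l ≤ n - 1 → ∃ M : ℝ, ∀ t ∈ Set.Icc t0 τ, |f l t| ≤ M) ∧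
  (∀ v : Fin n → ℝ, Measurable fun t => fn t v) ∧
  (∀ t ∈ Set.Icc t0 τ, Continuous (fn t))

lemma aux_A_mul (n : ℕ) (a : ℕ → ℝ → ℝ) (s : ℝ) (P : Matrix (Fin n) (Fin n) ℝ) (i j : Fin n) :
    (triA n a s * P) i j =
      if h : (i : ℕ) + 1 < n then a ((i : ℕ) + 2) s * P ⟨i + 1, h⟩ j else 0 := by
  rw [Matrix.mul_apply]
  split_ifs with h
  · rw [Finset.sum_eq_single (⟨i + 1, h⟩ : Fin n)]
    · simp [triA]
    · intro b _ hb
      have : (b : ℕ) ≠ i + 1 := fun h' => hb (Fin.ext h')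
      simp [triA, this]
    · simp
  · apply Finset.sum_eq_zero
    intro b _
    have : (b : ℕ) ≠ i + 1 := by have := b.2; omega
    simp [triA, this]

lemma aux_phi (n : ℕ) (t0 τ : ℝ) (a : ℕ → ℝ → ℝ)
    (Φ : ℝ → Matrix (Fin n) (Fin n) ℝ) (hΦ : IsFundamental n t0 τ (triA n a) Φ)
    (M : ℝ) (hM0 : 0 ≤ M)
    (hM : ∀ l, 2 ≤ l → l ≤ n → ∀ t ∈ Set.Icc t0 τ, |a l t| ≤ M) (m : ℕ) :
    ∃ c : ℝ, 1 ≤ c ∧ ∀ t ∈ Set.Icc t0 τ, ∀ i j : Fin n, n ≤ i + m →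
      (j < i → Φ t i j = 0) ∧ (j = i → Φ t i j = 1) ∧
      (i ≤ j → |Φ t i j| ≤ c * (t - t0) ^ ((j : ℕ) - i)) := by
  induction m with
  | zero => exact ⟨1, le_rfl, fun t _ i j h => absurd i.2 (by omega)⟩
  | succ m ih =>
    obtain ⟨c, hc, H⟩ := ih
    refine ⟨c + M * c, by nlinarith, fun t ht i j him => ?_⟩
    have hσ : 0 ≤ t - t0 := by linarith [ht.1]
    have key := hΦ.2 t ht i j
    have hsub : ∀ s ∈ Set.uIoc t0 t, s ∈ Set.Icc t0 τ := by
      intro s hs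
      rw [Set.uIoc_of_le ht.1] at hs
      exact ⟨hs.1.le, hs.2.trans ht.2⟩
    have hlow : j ≤ i → ∫ s in t0..t, (triA n a s * Φ s) i j = 0 := by
      intro hji
      rw [intervalIntegral.integral_congr (g := fun _ => (0:ℝ))]
      · simp
      · intro s hs'
        have hs : s ∈ Set.Icc t0 τ := by
          rw [Set.uIcc_of_le ht.1] at hs'
          exact ⟨hs'.1, hs'.2.trans ht.2⟩
        simp only [aux_A_mul]
        split_ifs with h
        · rw [((H s hs ⟨i + 1, h⟩ j (by simp; omega)).1
            (by rw [Fin.lt_def]; have := Fin.le_def.1 hji; simp; omega)), mul_zero]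
        · rfl
    refine ⟨fun hji => ?_, fun hji => ?_, fun hij => ?_⟩
    · rw [key, hlow hji.le, Matrix.one_apply_ne hji.ne', add_zero]
    · subst hji
      rw [key, hlow le_rfl, Matrix.one_apply_eq, add_zero]
    · rcases hij.eq_or_lt with rfl | hlt
      · rw [key, hlow le_rfl, Matrix.one_apply_eq, add_zero]
        simp; nlinarith
      · rw [key, Matrix.one_apply_ne hlt.ne, zero_add]
        have hlt' := Fin.lt_def.1 hlt
        have hi : (i : ℕ) + 1 < n := by have := j.2; omega
        have hb := intervalIntegral.norm_integral_le_of_norm_le_const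
          (f := fun s => (triA n a s * Φ s) i j) (a := t0) (b := t)
          (C := M * (c * (t - t0) ^ ((j : ℕ) - (i + 1)))) (by
            intro s hs
            have hs' := hsub s hs
            simp only [aux_A_mul, dif_pos hi, Real.norm_eq_abs, abs_mul]
            rw [Set.uIoc_of_le ht.1] at hs
            have h1 := (H s hs' ⟨i + 1, hi⟩ j (by simp; omega)).2.2
              (by rw [Fin.le_def]; simp; omega)
            have h2 := hM (i + 2) (by omega) (by omega) s hs'
            have h3 : (s - t0) ^ ((j : ℕ) - (i + 1)) ≤ (t - t0) ^ ((j : ℕ) - (i + 1)) :=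
              pow_le_pow_left₀ (by linarith [hs.1]) (by linarith [hs.2]) _
            refine mul_le_mul h2 (h1.trans ?_) (abs_nonneg _) hM0
            exact mul_le_mul_of_nonneg_left h3 (by linarith))
        rw [Real.norm_eq_abs, abs_of_nonneg hσ] at hb
        refine hb.trans ?_
        have e : (j : ℕ) - i = ((j : ℕ) - (i + 1)) + 1 := by omega
        rw [e, pow_succ]
        have : 0 ≤ c * ((t - t0) ^ ((j : ℕ) - (i + 1)) * (t - t0)) := by positivity
        nlinarith

lemma aux_inv_s15 (n : ℕ) (c : ℝ) (hc : 1 ≤ c) (m : ℕ) :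
    ∃ c' : ℝ, 1 ≤ c' ∧ ∀ σ : ℝ, 0 ≤ σ → ∀ P X : Matrix (Fin n) (Fin n) ℝ, P * X = 1 →
      (∀ i j : Fin n, (j < i → P i j = 0) ∧ (j = i → P i j = 1) ∧
      (i ≤ j → |P i j| ≤ c * σ ^ ((j : ℕ) - i))) →
      ∀ i j : Fin n, n ≤ i + m → |X i j| * σ ^ (i : ℕ) ≤ c' * σ ^ (j : ℕ) := by
  induction m with
  | zero => exact ⟨1, le_rfl, fun σ _ P X _ _ i j h => absurd i.2 (by omega)⟩
  | succ m ih =>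
    obtain ⟨c', hc', H⟩ := ih
    refine ⟨1 + n * (c * c'), by
      have : 0 ≤ (n:ℝ) * (c * c') := by positivity
      linarith, fun σ hσ P X hPX hP i j him => ?_⟩
    have h1 := congrFun (congrFun hPX i) j
    rw [Matrix.mul_apply, ← Finset.add_sum_erase _ _ (Finset.mem_univ i), (hP i i).2.1 rfl,
      one_mul] at h1
    have h2 : X i j = (1 : Matrix (Fin n) (Fin n) ℝ) i j -
      ∑ k ∈ Finset.univ.erase i, P i k * X k j := by linarith
    have h3 : |(1 : Matrix (Fin n) (Fin n) ℝ) i j| * σ ^ (i : ℕ) ≤ σ ^ (j : ℕ) := by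
      by_cases h : i = j
      · subst h; simp
      · rw [Matrix.one_apply_ne h]; simp; positivity
    have h4 : |∑ k ∈ Finset.univ.erase i, P i k * X k j| * σ ^ (i : ℕ) ≤
        n * (c * c') * σ ^ (j : ℕ) := by
      calc _ ≤ (∑ k ∈ Finset.univ.erase i, |P i k * X k j|) * σ ^ (i : ℕ) :=
            mul_le_mul_of_nonneg_right (Finset.abs_sum_le_sum_abs _ _) (by positivity)
        _ = ∑ k ∈ Finset.univ.erase i, |P i k * X k j| * σ ^ (i : ℕ) := Finset.sum_mul _ _ _
        _ ≤ ∑ k ∈ Finset.univ.erase i, (c * c') * σ ^ (j : ℕ) := by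
            refine Finset.sum_le_sum fun k hk => ?_
            have hki := Finset.ne_of_mem_erase hk
            rcases lt_or_gt_of_ne hki with h | h
            · rw [(hP i k).1 h]; simp; positivity
            · have h' := Fin.lt_def.1 h
              have a1 := (hP i k).2.2 h.le
              have a2 := H σ hσ P X hPX hP k j (by omega)
              have e : σ ^ (k : ℕ) = σ ^ ((k : ℕ) - i) * σ ^ (i : ℕ) := by
                rw [← pow_add]; congr 1; omega
              rw [abs_mul]
              calc _ = |P i k| * (|X k j| * σ ^ (i:ℕ)) := by ring
                _ ≤ (c * σ ^ ((k : ℕ) - i)) * (|X k j| * σ ^ (i:ℕ)) :=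
                  mul_le_mul_of_nonneg_right a1 (by positivity)
                _ = c * (|X k j| * σ ^ (k : ℕ)) := by rw [e]; ring
                _ ≤ c * (c' * σ ^ (j : ℕ)) := mul_le_mul_of_nonneg_left a2 (by linarith)
                _ = _ := by ring
        _ ≤ ∑ k : Fin n, (c * c') * σ ^ (j : ℕ) :=
            Finset.sum_le_sum_of_subset_of_nonneg (Finset.erase_subset _ _)
              (fun _ _ _ => by positivity)
        _ = _ := by simp; ring
    rw [h2]
    calc _ ≤ (|(1 : Matrix (Fin n) (Fin n) ℝ) i j| +
          |∑ k ∈ Finset.univ.erase i, P i k * X k j|) * σ ^ (i : ℕ) :=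
          mul_le_mul_of_nonneg_right (abs_sub _ _) (by positivity)
      _ ≤ _ := by rw [add_mul]; linarith

lemma aux_inv_cont (n : ℕ) (s : Set ℝ) (Φ : ℝ → Matrix (Fin n) (Fin n) ℝ)
    (hc : ∀ i j : Fin n, ContinuousOn (fun t => Φ t i j) s)
    (hu : ∀ t ∈ s, IsUnit (Φ t)) (i j : Fin n) :
    ContinuousOn (fun t => (Φ t)⁻¹ i j) s := by
  rw [continuousOn_iff_continuous_domRestrict]
  have h : Continuous (fun t : s => Φ t) :=
    continuous_matrix fun i j => continuousOn_iff_continuous_domRestrict.1 (hc i j)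
  have h2 : Continuous (fun t : s => (Φ t)⁻¹) := by
    simp only [Matrix.inv_def, Ring.inverse_eq_inv']
    refine Continuous.smul (h.matrix_det.inv₀ fun t => ?_) h.matrix_adjugate
    exact ((Matrix.isUnit_iff_isUnit_det _).1 (hu t t.2)).ne_zero
  exact h2.matrix_elem i j

open Classical in
/-- integral of a difference, robust with respect to non-integrability -/
lemma aux_int_sub (u v : ℝ → ℝ) (a b : ℝ)
    (h : IntervalIntegrable (fun s => u s - v s) volume a b) :
    (∫ s in a..b, u s) - (∫ s in a..b, v s) =
      (if IntervalIntegrable u volume a b then ∫ s in a..b, (u s - v s) else 0) := by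
  split_ifs with hu
  · have hv : IntervalIntegrable v volume a b := by
      have := hu.sub h
      simpa using this
    rw [intervalIntegral.integral_sub hu hv]
  · have hv : ¬ IntervalIntegrable v volume a b := by
      intro hv
      apply hu
      have := h.add hv
      simpa using this
    rw [intervalIntegral.integral_undef hu, intervalIntegral.integral_undef hv, sub_zero]

lemma aux_outer (n : ℕ) (hn : 0 < n) (P : Matrix (Fin n) (Fin n) ℝ) (v : Fin n → ℝ) (i : Fin n) :
    (Pᵀ * (triC n)ᵀ * triC n * P).mulVec v i = P ⟨0, hn⟩ i * ∑ k, P ⟨0, hn⟩ k * v k := by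
  have h : ∀ j, (triC n * P) 0 j = P ⟨0, hn⟩ j := by
    intro j
    rw [Matrix.mul_apply, Finset.sum_eq_single (⟨0, hn⟩ : Fin n)]
    · simp [triC]
    · intro b _ hb
      have : (b : ℕ) ≠ 0 := fun h' => hb (Fin.ext h')
      simp [triC, this]
    · simp
  rw [Matrix.mul_assoc, ← Matrix.transpose_mul, Matrix.mulVec, dotProduct, Finset.mul_sum]
  refine Finset.sum_congr rfl fun k _ => ?_
  rw [Matrix.mul_apply]
  simp [h]
  ring

lemma aux_supN (n : ℕ) (a b : ℝ) (d : ℝ → Fin n → ℝ) (hd : ContinuousOn d (Set.Icc a b))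
    (s : ℝ) (hs : s ∈ Set.Icc a b) : ‖d s‖ ≤ supN n a b d := by
  have hb : BddAbove ((fun t => ‖d t‖) '' Set.Icc a b) :=
    isCompact_Icc.bddAbove_image hd.norm
  refine le_ciSup (f := fun t : Set.Icc a b => ‖d (t : ℝ)‖) ?_ ⟨s, hs⟩
  rwa [Set.image_eq_range] at hb

lemma aux_meas (n : ℕ) (t0 τ t : ℝ) (ht : t ≤ τ) (fn : ℝ → (Fin n → ℝ) → ℝ)
    (h1 : ∀ v : Fin n → ℝ, Measurable fun t => fn t v)
    (h2 : ∀ t ∈ Set.Icc t0 τ, Continuous (fn t))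
    (d : ℝ → Fin n → ℝ) (hd : ContinuousOn d (Set.Icc t0 t)) :
    AEStronglyMeasurable (fun s => fn s (d s)) (volume.restrict (Set.Icc t0 t)) := by
  classical
  let F : (Fin n → ℝ) → ℝ → ℝ := fun v s => if s ∈ Set.Icc t0 τ then fn s v else 0
  have hF : Measurable (Function.uncurry F) := by
    apply measurable_uncurry_of_continuous_of_measurable
    · intro s
      by_cases hs : s ∈ Set.Icc t0 τ
      · simp only [F, if_pos hs]; exact h2 s hs
      · simp only [F, hs, if_false]; exact continuous_const
    · intro v
      exact Measurable.ite measurableSet_Icc (h1 v) measurable_const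
  have hdm : AEMeasurable d (volume.restrict (Set.Icc t0 t)) :=
    hd.aemeasurable measurableSet_Icc
  have := hF.comp_aemeasurable (hdm.prodMk aemeasurable_id)
  refine (this.congr ?_).aestronglyMeasurable
  filter_upwards [ae_restrict_mem measurableSet_Icc] with s hs
  have : s ∈ Set.Icc t0 τ := ⟨hs.1, hs.2.trans ht⟩
  simp only [Function.comp, Function.uncurry, F, id]
  rw [if_pos this]

/-- The inner difference: bound and measurability. -/
lemma aux_inner (u v : ℝ → ℝ) (t0 t B : ℝ) (p : ℕ)
    (hm : AEStronglyMeasurable (fun s => u s - v s) (volume.restrict (Set.Ioc t0 t)))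
    (hB : 0 ≤ B)
    (hb : ∀ s ∈ Set.Ioc t0 t, |u s - v s| ≤ B * (s - t0) ^ p) (ht : t0 ≤ t) :
    AEStronglyMeasurable (fun ρ => (∫ s in t0..ρ, u s) - (∫ s in t0..ρ, v s))
      (volume.restrict (Set.Ioc t0 t)) ∧
    ∀ ρ ∈ Set.Ioc t0 t, |(∫ s in t0..ρ, u s) - (∫ s in t0..ρ, v s)| ≤ B * (ρ - t0) ^ (p + 1) := by
  classical
  have hint : IntegrableOn (fun s => u s - v s) (Set.Ioc t0 t) := by
    refine ⟨hm, .restrict_of_bounded (C := B * (t - t0) ^ p) (by simp) ?_⟩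
    filter_upwards [ae_restrict_mem measurableSet_Ioc] with s hs
    refine (hb s hs).trans ?_
    exact mul_le_mul_of_nonneg_left
      (pow_le_pow_left₀ (by linarith [hs.1]) (by linarith [hs.2]) _) hB
  have hii : ∀ ρ ∈ Set.Ioc t0 t, IntervalIntegrable (fun s => u s - v s) volume t0 ρ := by
    intro ρ hρ
    rw [intervalIntegrable_iff_integrableOn_Ioc_of_le hρ.1.le]
    exact hint.mono_set (Set.Ioc_subset_Ioc_right hρ.2)
  have heq : ∀ ρ ∈ Set.Ioc t0 t, (∫ s in t0..ρ, u s) - (∫ s in t0..ρ, v s) =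
      (if IntervalIntegrable u volume t0 ρ then ∫ s in t0..ρ, (u s - v s) else 0) :=
    fun ρ hρ => aux_int_sub u v t0 ρ (hii ρ hρ)
  constructor
  · have hS : MeasurableSet {ρ | t0 ≤ ρ ∧ IntervalIntegrable u volume t0 ρ} := by
      apply Set.OrdConnected.measurableSet
      refine ⟨fun x hx y hy z hz => ⟨hx.1.trans hz.1, hy.2.mono_set ?_⟩⟩
      rw [Set.uIcc_of_le (hx.1.trans hz.1), Set.uIcc_of_le hy.1]
      exact Set.Icc_subset_Icc_right hz.2
    have hcont : ContinuousOn (fun ρ => ∫ s in t0..ρ, (u s - v s)) (Set.Icc t0 t) := by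
      have := intervalIntegral.continuousOn_primitive_interval (μ := volume)
        (f := fun s => u s - v s) (a := t0) (b := t)
        (by rw [Set.uIcc_of_le ht]; exact (integrableOn_Icc_iff_integrableOn_Ioc).2 hint)
      rwa [Set.uIcc_of_le ht] at this
    have h1 : AEStronglyMeasurable (fun ρ => ∫ s in t0..ρ, (u s - v s))
        (volume.restrict (Set.Ioc t0 t)) :=
      (hcont.mono Set.Ioc_subset_Icc_self).aestronglyMeasurable measurableSet_Ioc
    refine (h1.indicator hS).congr ?_
    filter_upwards [ae_restrict_mem measurableSet_Ioc] with ρ hρ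
    rw [heq ρ hρ]
    simp [Set.indicator, hρ.1.le]
  · intro ρ hρ
    rw [heq ρ hρ]
    have hpos : 0 ≤ ρ - t0 := by linarith [hρ.1]
    split_ifs with h
    · have := intervalIntegral.norm_integral_le_of_norm_le_const
          (f := fun s => u s - v s) (a := t0) (b := ρ)
          (C := B * (ρ - t0) ^ p) (by
            intro s hs
            rw [Set.uIoc_of_le hρ.1.le] at hs
            refine (hb s ⟨hs.1, hs.2.trans hρ.2⟩).trans ?_
            exact mul_le_mul_of_nonneg_left
              (pow_le_pow_left₀ (by linarith [hs.1]) (by linarith [hs.2]) _) hB)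
      rw [Real.norm_eq_abs, abs_of_nonneg hpos] at this
      rw [pow_succ]; linarith
    · simp; positivity

theorem stmt15 (n : ℕ) (hn : 2 ≤ n) (t0 τ : ℝ) (ht : t0 < τ)
    (a f : ℕ → ℝ → ℝ) (fn : ℝ → (Fin n → ℝ) → ℝ)
    (hreg : TriRegular n t0 τ a f fn)
    (Φ : ℝ → Matrix (Fin n) (Fin n) ℝ) (hΦ : IsFundamental n t0 τ (triA n a) Φ)
    (hΦinv : ∀ t ∈ Set.Icc t0 τ, IsUnit (Φ t))
    (R L : ℝ) (hR : 0 < R) (hL : 0 < L)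
    (hLip : ∀ t ∈ Set.Icc t0 τ, ∀ z1 z2 : Fin n → ℝ,
      ‖z1‖ ≤ R → ‖z2‖ ≤ R → |fn t z1 - fn t z2| ≤ L * ‖z1 - z2‖) :
    ∃ K > (0:ℝ), ∀ t ∈ Set.Ioc t0 τ, ∀ d1 d2 : ℝ → (Fin n → ℝ),
      ContinuousOn d1 (Set.Icc t0 t) → ContinuousOn d2 (Set.Icc t0 t) →
      supN n t0 t d1 ≤ R → supN n t0 t d2 ≤ R →
      ∀ i : Fin n,
        |(Xi n 1 t0 (fun _ => triC n) Φ (triG n f fn) d1 t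
            - Xi n 1 t0 (fun _ => triC n) Φ (triG n f fn) d2 t) i|
          ≤ K * (t - t0) ^ (n + (i : ℕ) + 1) * supN n t0 t (fun s => d1 s - d2 s) := by
  obtain ⟨_, ha, _, _, hfm, hfc⟩ := hreg
  have hn0 : 0 < n := by omega
  -- uniform bound on the coefficients
  obtain ⟨M, hM0, hM⟩ : ∃ M : ℝ, 0 ≤ M ∧
      ∀ l, 2 ≤ l → l ≤ n → ∀ t ∈ Set.Icc t0 τ, |a l t| ≤ M := by
    choose! m hm using ha
    refine ⟨∑ l ∈ Finset.Icc 2 n, |m l|, Finset.sum_nonneg fun _ _ => abs_nonneg _, ?_⟩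
    intro l h2 hl t ht
    refine (hm l h2 hl t ht).trans ((le_abs_self _).trans ?_)
    exact Finset.single_le_sum (f := fun l => |m l|) (fun _ _ => abs_nonneg _)
      (Finset.mem_Icc.2 ⟨h2, hl⟩)
  obtain ⟨c, hc, Hc⟩ := aux_phi n t0 τ a Φ hΦ M hM0 hM n
  obtain ⟨c', hc', Hc'⟩ := aux_inv_s15 n c hc n
  have hXc := aux_inv_cont n (Set.Icc t0 τ) Φ hΦ.1 hΦinv
  have hP0 : ∀ t ∈ Set.Icc t0 τ, ∀ j : Fin n, |Φ t ⟨0, hn0⟩ j| ≤ c * (t - t0) ^ (j : ℕ) := by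
    intro t ht j
    have := (Hc t ht ⟨0, hn0⟩ j (by simp)).2.2 (by rw [Fin.le_def]; simp)
    simpa using this
  let last : Fin n := ⟨n - 1, by omega⟩
  have hX : ∀ s ∈ Set.Ioc t0 τ, ∀ k : Fin n,
      |(Φ s)⁻¹ k last| ≤ c' * (s - t0) ^ (n - 1 - (k : ℕ)) := by
    intro s hs k
    have hs' : s ∈ Set.Icc t0 τ := ⟨hs.1.le, hs.2⟩
    have hpos : 0 < s - t0 := by linarith [hs.1]
    have h := Hc' (s - t0) hpos.le (Φ s) (Φ s)⁻¹
      (Matrix.mul_nonsing_inv _ ((Matrix.isUnit_iff_isUnit_det _).1 (hΦinv s hs')))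
      (fun i j => Hc s hs' i j (by omega)) k last (by omega)
    have e : (s - t0) ^ (last : ℕ) = (s - t0) ^ (n - 1 - (k : ℕ)) * (s - t0) ^ (k : ℕ) := by
      rw [← pow_add]; congr 1; have := k.2; simp only [last]; omega
    rw [e, ← mul_assoc] at h
    exact le_of_mul_le_mul_right h (by positivity)
  refine ⟨n * (c * c * c' * L), by positivity, ?_⟩
  intro t htm d1 d2 hd1 hd2 hR1 hR2 i
  set S := supN n t0 t (fun s => d1 s - d2 s) with hS
  have hsub : ∀ s ∈ Set.Icc t0 t, s ∈ Set.Icc t0 τ := fun s hs => ⟨hs.1, hs.2.trans htm.2⟩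
  have hfd : ∀ s ∈ Set.Icc t0 t, |fn s (d1 s) - fn s (d2 s)| ≤ L * S := by
    intro s hs
    refine (hLip s (hsub s hs) _ _ ((aux_supN n t0 t d1 hd1 s hs).trans hR1)
      ((aux_supN n t0 t d2 hd2 s hs).trans hR2)).trans ?_
    exact mul_le_mul_of_nonneg_left (aux_supN n t0 t _ (hd1.sub hd2) s hs) hL.le
  have hS0 : 0 ≤ S := (norm_nonneg _).trans
    (aux_supN n t0 t _ (hd1.sub hd2) t ⟨htm.1.le, le_rfl⟩)
  -- inner integrands
  have hdiff : ∀ s, ∀ k : Fin n, ((Φ s)⁻¹).mulVec (triG n f fn s (d1 s)) k -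
      ((Φ s)⁻¹).mulVec (triG n f fn s (d2 s)) k =
      (Φ s)⁻¹ k last * (fn s (d1 s) - fn s (d2 s)) := by
    intro s k
    rw [← Pi.sub_apply, ← Matrix.mulVec_sub, Matrix.mulVec, dotProduct,
      Finset.sum_eq_single last]
    · simp [triG, last]
    · intro b _ hb
      have : (b : ℕ) ≠ n - 1 := fun h' => hb (Fin.ext h')
      simp [triG, this]
    · simp
  have hmX : ∀ k : Fin n, AEStronglyMeasurable (fun s => (Φ s)⁻¹ k last *
      (fn s (d1 s) - fn s (d2 s))) (volume.restrict (Set.Ioc t0 t)) := by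
    intro k
    refine AEStronglyMeasurable.mul ?_ ?_
    · exact ((hXc k last).mono fun s hs => hsub s ⟨hs.1.le, hs.2⟩).aestronglyMeasurable
        measurableSet_Ioc
    · exact ((aux_meas n t0 τ t htm.2 fn hfm hfc d1 hd1).sub
        (aux_meas n t0 τ t htm.2 fn hfm hfc d2 hd2)).mono_measure
          (Measure.restrict_mono Set.Ioc_subset_Icc_self le_rfl)
  have hin := fun k : Fin n => aux_inner
    (fun s => ((Φ s)⁻¹).mulVec (triG n f fn s (d1 s)) k)
    (fun s => ((Φ s)⁻¹).mulVec (triG n f fn s (d2 s)) k) t0 t (c' * (L * S)) (n - 1 - (k : ℕ))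
    (by simp only [hdiff]; exact hmX k) (by positivity)
    (by
      intro s hs
      simp only [hdiff, abs_mul]
      have h1 := hX s ⟨hs.1, hs.2.trans htm.2⟩ k
      have h2 := hfd s ⟨hs.1.le, hs.2⟩
      calc _ ≤ (c' * (s - t0) ^ (n - 1 - (k : ℕ))) * (L * S) :=
            mul_le_mul h1 h2 (abs_nonneg _) ((abs_nonneg _).trans h1)
        _ = _ := by ring) htm.1.le
  have hPm : ∀ k, AEStronglyMeasurable (fun s => Φ s ⟨0, hn0⟩ k)
      (volume.restrict (Set.Ioc t0 t)) := fun k =>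
    ((hΦ.1 ⟨0, hn0⟩ k).mono fun s hs => hsub s ⟨hs.1.le, hs.2⟩).aestronglyMeasurable
        measurableSet_Ioc
  -- outer integral
  have hout := aux_inner
    (fun ρ => ((Φ ρ)ᵀ * (triC n)ᵀ * triC n * Φ ρ).mulVec
      (fun i' => ∫ s in t0..ρ, ((Φ s)⁻¹).mulVec (triG n f fn s (d1 s)) i') i)
    (fun ρ => ((Φ ρ)ᵀ * (triC n)ᵀ * triC n * Φ ρ).mulVec
      (fun i' => ∫ s in t0..ρ, ((Φ s)⁻¹).mulVec (triG n f fn s (d2 s)) i') i)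
    t0 t (n * (c * c * c' * L) * S) (n + i) (by
      simp only [aux_outer n hn0, ← mul_sub, ← Finset.sum_sub_distrib]
      refine (hPm i).mul ?_
      refine Finset.aestronglyMeasurable_fun_sum _ fun k _ => ?_
      exact (hPm k).mul (hin k).1) (by positivity) (by
      intro ρ hρ
      have hρ' := hsub ρ ⟨hρ.1.le, hρ.2⟩
      have hpos : 0 ≤ ρ - t0 := by linarith [hρ.1]
      simp only [aux_outer n hn0, ← mul_sub, ← Finset.sum_sub_distrib]
      rw [abs_mul]
      have hsum : |∑ k, Φ ρ ⟨0, hn0⟩ k *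
          ((∫ s in t0..ρ, ((Φ s)⁻¹).mulVec (triG n f fn s (d1 s)) k) -
            ∫ s in t0..ρ, ((Φ s)⁻¹).mulVec (triG n f fn s (d2 s)) k)| ≤
          ∑ k : Fin n, c * (c' * (L * S)) * (ρ - t0) ^ n := by
        refine (Finset.abs_sum_le_sum_abs _ _).trans (Finset.sum_le_sum fun k _ => ?_)
        rw [abs_mul]
        have h1 := hP0 ρ hρ' k
        have e : (ρ - t0) ^ n = (ρ - t0) ^ (k : ℕ) * (ρ - t0) ^ (n - 1 - (k : ℕ) + 1) := by
          rw [← pow_add]; congr 1; have := k.2; omega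
        calc _ ≤ (c * (ρ - t0) ^ (k : ℕ)) *
              (c' * (L * S) * (ρ - t0) ^ (n - 1 - (k : ℕ) + 1)) :=
              mul_le_mul h1 ((hin k).2 ρ hρ) (abs_nonneg _) ((abs_nonneg _).trans h1)
          _ = _ := by rw [e]; ring
      have h1 := hP0 ρ hρ' i
      refine (mul_le_mul h1 hsum (abs_nonneg _) ((abs_nonneg _).trans h1)).trans (le_of_eq ?_)
      simp only [Finset.sum_const, Finset.card_univ, Fintype.card_fin, nsmul_eq_mul]
      rw [pow_add]; ring) htm.1.le
  have := hout.2 t ⟨htm.1, le_rfl⟩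
  rw [Pi.sub_apply]
  unfold Xi
  refine this.trans (le_of_eq ?_)
  ring
end
end
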